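/- Let G=(V,w,μ,d) be a finite connected weighted graph with a general path distance and let m∈ℕ. Then G is Ollivier-Betti sharp with β₁(M₂(G))=m if and only if there exist an abelian group structure · on V and generators a_1,…,a_m such that ((V,·),(a_1,…,a_m),w,μ,d) is a weighted flat torus. -/

import Mathlib

/-!
Write `p(x, y) = w(x, y) / μ(x)`, and call an edge `x → y` tight for a 1-form `α ≤ d` if
`α(x, y) = d(x, y)`.

**Curvature and closed forms.** A walk of at most three edges which is not geodesic closes up,
together with a geodesic between its endpoints, to a cycle in `X₂` (degenerate cases reduce to
shorter walks and triangles). Hence a closed form `α ≤ d` grows at most by the distance of the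
endpoints along such walks (`good_ball`). Around an edge `x ∼ y` it thus defines an admissible
pair of Kantorovich potentials, and non-negative curvature along a tight edge says that the
divergence of `α` does not increase (`closed_compare`). Applied to the perturbations `α - s dφ`
of a harmonic form `α` this becomes an inequality between `Δφ(x)` and `Δφ(y)` on tight edges
(`lap_le_of_tight`).

**Maxima are attained everywhere.** Let `α ≤ d` be harmonic with a tight edge. If the tight edges
contained no directed cycle, there would be functions `φ` growing by at least `d` along tight
edges, and the one of least `L²(μ)` norm could be improved by the heat flow
(`exists_tight_cycle`). Applying the inequality to indicator functions shows that a tight cycle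
can be reached from every vertex (`exists_tight_out`). So the maximum of `α / d` is attained at
every vertex (`max_everywhere`).

**Frames.** The functionals `α ↦ α(x, y) / d(x, y)` on the space of harmonic forms are finite in
number, symmetric and separate points, so their exposed elements contain a basis of the dual
space. By the previous paragraph each exposed functional and its negative are represented by
edges at every vertex (`exists_frame`). This gives `2 β₁ ≤ deg(x)` for all `x`. In the sharp case
all neighbours are of the form `nb i s x`, the step from `x` in the `i`-th direction with sign
`s`, and the dual basis `α i` satisfies `α i = ± d` on the `i`-th axis and `α i = 0` on the others.

**Squares.** For two axes with positive steps `S, T`, curvature along `x ∼ S x`, applied to the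
coordinate form of `S` with a bump at `T (S x)`, forces mass to be transported from `T x` to
`T (S x)` (`IsPair.flow_le`). This yields invariance of `d` and `p` under translation and
`S (T x) = T (S x)`. The permutations `S` commute and act transitively, so they are the
translations by generators of an abelian group structure on `V` (`exists_commGroup`).

**Converse.** On a flat torus, a `1`-Lipschitz function which grows by `d` along `x ∼ b x` has
`Δf(b x) ≤ Δf(x)`, by comparing the edges at `x` with their translates at `b x`
(`torus_lap_le`); and all degrees are at most `2 m`, so `2 β₁ ≤ deg_max` is an equality.
-/

open Finset

namespace Paper

variable {V : Type*}

/-- Adjacency relation of a weighted graph: `x ∼ y` iff `w x y > 0`. -/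
def Adj (w : V → V → ℝ) (x y : V) : Prop := 0 < w x y

/-- The axioms of a weighted graph `(V, w, μ)`: `w` symmetric, nonnegative, vanishing on the
diagonal, and `μ` positive. -/
structure IsWeightedGraph (w : V → V → ℝ) (μ : V → ℝ) : Prop where
  symm : ∀ x y, w x y = w y x
  nonneg : ∀ x y, 0 ≤ w x y
  loopless : ∀ x, w x x = 0
  mu_pos : ∀ x, 0 < μ x

/-- Connectedness of the weighted graph. -/
def GraphConnected (w : V → V → ℝ) : Prop :=
  ∀ x y : V, ∃ (n : ℕ) (c : Fin (n + 1) → V), c 0 = x ∧ c (Fin.last n) = y ∧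
    ∀ i : Fin n, Adj w (c i.castSucc) (c i.succ)

/-- `d` is a general path distance for the graph with edge weight `w`:
symmetric, vanishing exactly on the diagonal, nonnegative, and equal to the infimum of the
lengths of paths joining the two points. -/
def IsPathDistance (w : V → V → ℝ) (d : V → V → ℝ) : Prop :=
  (∀ x y, d x y = d y x) ∧ (∀ x y, d x y = 0 ↔ x = y) ∧ (∀ x y, 0 ≤ d x y) ∧
  ∀ x y : V, IsGLB { s : ℝ |
      ∃ (n : ℕ) (c : Fin (n + 1) → V), c 0 = x ∧ c (Fin.last n) = y ∧
        (∀ i : Fin n, Adj w (c i.castSucc) (c i.succ)) ∧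
        s = ∑ i : Fin n, d (c i.castSucc) (c i.succ) } (d x y)

section Finite

variable [Fintype V]

/-- The (negative) graph Laplacian `Δ f (x) = ∑_y (w x y / μ x) (f y - f x)`. -/
noncomputable def lap (w : V → V → ℝ) (μ : V → ℝ) (f : V → ℝ) (x : V) : ℝ :=
  ∑ y, w x y / μ x * (f y - f x)

/-- The gradient `∇_{xy} f = (f x - f y)/d(x,y)`. -/
noncomputable def grad (d : V → V → ℝ) (f : V → ℝ) (x y : V) : ℝ := (f x - f y) / d x y

/-- The Lipschitz norm `‖∇ f‖_∞ = sup_{x ∼ y} |∇_{xy} f|`. -/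
noncomputable def gradNorm (w d : V → V → ℝ) (f : V → ℝ) : ℝ :=
  sSup { r : ℝ | ∃ x y, Adj w x y ∧ r = |grad d f x y| }

/-- The Ollivier curvature `κ(x,y) = inf {∇_{xy} Δ f : ∇_{yx} f = 1, ‖∇ f‖_∞ = 1}`. -/
noncomputable def kappa (w : V → V → ℝ) (μ : V → ℝ) (d : V → V → ℝ) (x y : V) : ℝ :=
  sInf { r : ℝ | ∃ f : V → ℝ, grad d f y x = 1 ∧ gradNorm w d f = 1 ∧
      r = grad d (lap w μ f) x y }

/-- Non-negative Ollivier curvature on every edge. -/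
def NonnegCurv (w : V → V → ℝ) (μ : V → ℝ) (d : V → V → ℝ) : Prop :=
  ∀ x y, Adj w x y → 0 ≤ kappa w μ d x y

/-- A cycle of length `n + 3`: an injective cyclic path along edges. -/
def IsCycle {n : ℕ} (w : V → V → ℝ) (c : ZMod (n + 3) → V) : Prop :=
  Function.Injective c ∧ ∀ i, Adj w (c i) (c (i + 1))

/-- Membership of a cycle in `X₂`: either a triangle, or
`d(x₀,x₃) < d(x₀,x₁)+d(x₁,x₂)+d(x₂,x₃)` and `x₃ ∼ … ∼ x_{n-1} ∼ x₀` is a geodesic. -/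
def InX2 {n : ℕ} (w d : V → V → ℝ) (c : ZMod (n + 3) → V) : Prop :=
  n = 0 ∨
    (d (c 0) (c 3) < d (c 0) (c 1) + d (c 1) (c 2) + d (c 2) (c 3) ∧
      ∑ i ∈ Finset.univ.filter (fun i : ZMod (n + 3) => i ≠ 0 ∧ i ≠ 1 ∧ i ≠ 2),
          d (c i) (c (i + 1)) = d (c 3) (c 0))

/-- The set of harmonic 1-forms `H₁(M₂(G))`: antisymmetric functions supported on edges
with vanishing cyclic sum along every cycle of `X₂` and vanishing divergence `δ* α`. -/
def H1set (w : V → V → ℝ) (μ : V → ℝ) (d : V → V → ℝ) : Set (V → V → ℝ) :=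
  { α | (∀ x y, α x y = -α y x) ∧ (∀ x y, ¬Adj w x y → α x y = 0) ∧
      (∀ (n : ℕ) (c : ZMod (n + 3) → V), IsCycle w c → InX2 w d c →
          ∑ i, α (c i) (c (i + 1)) = 0) ∧
      (∀ x, ∑ y, w x y / μ x * α x y = 0) }

/-- The first Betti number `β₁(M₂(G)) = dim H₁(M₂(G))`. -/
noncomputable def betti1 (w : V → V → ℝ) (μ : V → ℝ) (d : V → V → ℝ) : ℕ :=
  Module.finrank ℝ (Submodule.span ℝ (H1set w μ d))

/-- The combinatorial vertex degree. -/
noncomputable def deg (w : V → V → ℝ) (x : V) : ℕ := Nat.card { y : V // Adj w x y }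

/-- The minimal combinatorial vertex degree. -/
noncomputable def degMin (w : V → V → ℝ) : ℕ := ⨅ x : V, deg w x

/-- The maximal combinatorial vertex degree. -/
noncomputable def degMax (w : V → V → ℝ) : ℕ := ⨆ x : V, deg w x

end Finite

end Paper

namespace Paper

/-- `((V,·), (a_1,…,a_m), w, μ, d)` is a weighted flat torus: `(V,·)` is an abelian group
generated by `a_1,…,a_m` with `a_i ≠ a_j^ε` for `i ≠ j`, `d` is a general path distance, and
the torus conditions (i)–(v) hold. -/
def IsFlatTorus {V : Type*} [Fintype V] [CommGroup V] {m : ℕ} (a : Fin m → V)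
    (w : V → V → ℝ) (μ : V → ℝ) (d : V → V → ℝ) : Prop :=
  Subgroup.closure (Set.range a) = ⊤ ∧
  (∀ i j : Fin m, i ≠ j → a i ≠ a j ∧ a i ≠ (a j)⁻¹) ∧
  IsPathDistance w d ∧
  -- (i) the neighbours of `x` are exactly the `a_i^{±1} · x`
  (∀ x y : V, Adj w x y ↔ ∃ i, y = a i * x ∨ y = (a i)⁻¹ * x) ∧
  -- (ii)
  (∀ (x : V) (i : Fin m),
      w x (a i * x) * d x (a i * x) = w x ((a i)⁻¹ * x) * d x ((a i)⁻¹ * x)) ∧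
  -- (iii) with `p(x,y) = w(x,y)/μ(x)`
  (∀ (x : V) (i j : Fin m) (ε₁ ε₂ : ℤ), i ≠ j →
      (ε₁ = 1 ∨ ε₁ = -1) → (ε₂ = 1 ∨ ε₂ = -1) →
      w x (a i ^ ε₁ * x) / μ x
        = w (a j ^ ε₂ * x) (a i ^ ε₁ * (a j ^ ε₂ * x)) / μ (a j ^ ε₂ * x)) ∧
  -- (iv)
  (∀ (x : V) (i j : Fin m), i ≠ j → d x (a i * x) = d (a j * x) (a i * (a j * x))) ∧
  -- (v)
  betti1 w μ d = m

end Paper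

namespace Paper

/-! ### Path distances and geodesics -/

section Metric

variable {V : Type*} {w d : V → V → ℝ} {μ : V → ℝ}

theorem Adj.symm' (hG : IsWeightedGraph w μ) {x y : V} (h : Adj w x y) : Adj w y x := by
  unfold Adj at *; rwa [hG.symm]

theorem Adj.ne' (hG : IsWeightedGraph w μ) {x y : V} (h : Adj w x y) : x ≠ y := by
  rintro rfl; unfold Adj at h; rw [hG.loopless] at h; exact lt_irrefl _ h

theorem dist_self' (hd : IsPathDistance w d) (x : V) : d x x = 0 := (hd.2.1 x x).2 rfl

theorem dist_pos' (hd : IsPathDistance w d) {x y : V} (h : x ≠ y) : 0 < d x y :=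
  lt_of_le_of_ne (hd.2.2.1 x y) (fun h0 => h ((hd.2.1 x y).1 h0.symm))

theorem dist_edge_triangle (hd : IsPathDistance w d) {x u : V} (z : V) (h : Adj w x u) :
    d x z ≤ d x u + d u z := by
  have : d x z - d x u ≤ d u z := by
    refine (hd.2.2.2 u z).2 ?_
    rintro s ⟨n, c, h0, hl, hadj, rfl⟩
    have : d x z ≤ d x u + ∑ i : Fin n, d (c i.castSucc) (c i.succ) := by
      apply (hd.2.2.2 x z).1
      refine ⟨n + 1, Fin.cons x c, by simp, ?_, ?_, ?_⟩
      · rw [← Fin.succ_last, Fin.cons_succ, hl]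
      · intro i
        refine Fin.cases ?_ (fun j => ?_) i
        · simpa [h0] using h
        · have := hadj j
          rwa [← Fin.succ_castSucc, Fin.cons_succ, Fin.cons_succ]
      · rw [Fin.sum_univ_succ]
        congr 1
        · simp [h0]
    linarith
  linarith

/-- Iterated triangle inequality along a walk `c` towards a fixed vertex `z`. -/
theorem dist_path_le (hd : IsPathDistance w d) (z : V) : ∀ (n : ℕ) (c : Fin (n + 1) → V),
    (∀ i : Fin n, Adj w (c i.castSucc) (c i.succ)) →
    d (c 0) z ≤ ∑ i : Fin n, d (c i.castSucc) (c i.succ) + d (c (Fin.last n)) z := by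
  intro n
  induction n with
  | zero => intro c _; simp
  | succ n ih =>
    intro c hc
    have h1 := ih (fun i => c i.succ) (fun i => by
      have := hc i.succ; rwa [← Fin.succ_castSucc] at this)
    have h2 := dist_edge_triangle hd z (hc 0)
    rw [Fin.sum_univ_succ]
    simp only [Fin.succ_castSucc, Fin.succ_last, Fin.castSucc_zero] at *
    linarith

theorem dist_triangle' (hd : IsPathDistance w d) (x y z : V) : d x z ≤ d x y + d y z := by
  have : d x z - d y z ≤ d x y := by
    refine (hd.2.2.2 x y).2 ?_
    rintro s ⟨n, c, h0, hl, hadj, rfl⟩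
    have := dist_path_le hd z n c hadj
    rw [h0, hl] at this
    linarith
  linarith

/-- Every pair of distinct points admits a neighbour lying between them; the infimum in the
definition of a path distance is attained because there are finitely many neighbours. -/
theorem exists_first_step [Fintype V] (hconn : GraphConnected w) (hd : IsPathDistance w d)
    {x y : V} (hxy : x ≠ y) : ∃ u, Adj w x u ∧ d x y = d x u + d u y := by
  classical
  have key : ∀ (n : ℕ) (c : Fin (n + 1) → V), c 0 = x → c (Fin.last n) = y →
      (∀ i : Fin n, Adj w (c i.castSucc) (c i.succ)) →
      ∃ u, Adj w x u ∧ d x u + d u y ≤ ∑ i : Fin n, d (c i.castSucc) (c i.succ) := by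
    intro n c h0 hl hadj
    cases n with
    | zero => exact absurd (h0.symm.trans hl) hxy
    | succ n =>
      refine ⟨c 1, by simpa [h0] using hadj 0, ?_⟩
      have h1 := dist_path_le hd y n (fun i => c i.succ) (fun i => by
        have := hadj i.succ; rwa [← Fin.succ_castSucc] at this)
      rw [Fin.sum_univ_succ]
      simp only [Fin.succ_castSucc, Fin.succ_last, Fin.castSucc_zero, Fin.succ_zero_eq_one] at *
      rw [hl, dist_self' hd] at h1
      rw [h0]
      linarith
  obtain ⟨n, c, h0, hl, hadj⟩ := hconn x y
  obtain ⟨u0, hu0, -⟩ := key n c h0 hl hadj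
  obtain ⟨u, hu, hmin⟩ := Finset.exists_min_image
    (Finset.univ.filter (fun u => Adj w x u)) (fun u => d x u + d u y) ⟨u0, by simpa using hu0⟩
  refine ⟨u, by simpa using hu, le_antisymm (dist_triangle' hd _ _ _) ?_⟩
  refine (hd.2.2.2 x y).2 ?_
  rintro s ⟨n, c, h0, hl, hadj, rfl⟩
  obtain ⟨u', hu', hle⟩ := key n c h0 hl hadj
  exact (hmin u' (by simpa using hu')).trans hle

/-- `q 0 ∼ ⋯ ∼ q k` is a geodesic from `x` to `y`, expressed by the fact that each step
decreases the distance to `y` by the length of the edge. -/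
structure IsGeod (w d : V → V → ℝ) (x y : V) (k : ℕ) (q : ℕ → V) : Prop where
  start : q 0 = x
  finish : q k = y
  adj : ∀ i < k, Adj w (q i) (q (i + 1))
  step : ∀ i < k, d (q i) y = d (q i) (q (i + 1)) + d (q (i + 1)) y

theorem exists_geod [Fintype V] (hG : IsWeightedGraph w μ) (hconn : GraphConnected w)
    (hd : IsPathDistance w d) (y : V) : ∀ x : V, ∃ k q, IsGeod w d x y k q := by
  classical
  intro x
  induction hn : (Finset.univ.filter (fun u => d u y < d x y)).card using
    Nat.strong_induction_on generalizing x with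
  | _ n ih =>
    by_cases hxy : x = y
    · exact ⟨0, fun _ => x, rfl, hxy, by simp, by simp⟩
    obtain ⟨u, hu, hd1⟩ := exists_first_step hconn hd hxy
    have hpos := dist_pos' hd (hu.ne' hG)
    have hlt : d u y < d x y := by linarith
    obtain ⟨k, q, hq⟩ := ih (Finset.univ.filter (fun v => d v y < d u y)).card (by
      rw [← hn]
      refine Finset.card_lt_card ⟨fun v hv => ?_, fun h => ?_⟩
      · simp only [Finset.mem_filter, Finset.mem_univ, true_and] at *; linarith
      · have := h (show u ∈ _ by simpa using hlt)
        simp at this) u rfl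
    refine ⟨k + 1, fun i => Nat.casesOn i x q, rfl, hq.finish, ?_, ?_⟩
    · rintro (_ | i) hi
      · simpa [hq.start] using hu
      · exact hq.adj i (by omega)
    · rintro (_ | i) hi
      · simpa [hq.start] using hd1
      · exact hq.step i (by omega)

theorem IsGeod.sum_add {x y : V} {k : ℕ} {q : ℕ → V} (hq : IsGeod w d x y k q) :
    ∀ j ≤ k, ∑ i ∈ Finset.range j, d (q i) (q (i + 1)) + d (q j) y = d x y := by
  intro j
  induction j with
  | zero => intro _; simp [hq.start]
  | succ j ih =>
    intro hj
    rw [Finset.sum_range_succ, ← ih (by omega), hq.step j (by omega)]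
    ring

theorem IsGeod.sum (hd : IsPathDistance w d) {x y : V} {k : ℕ} {q : ℕ → V}
    (hq : IsGeod w d x y k q) : ∑ i ∈ Finset.range k, d (q i) (q (i + 1)) = d x y := by
  have := hq.sum_add k le_rfl
  rwa [hq.finish, dist_self' hd, add_zero] at this

theorem IsGeod.anti (hG : IsWeightedGraph w μ) (hd : IsPathDistance w d) {x y : V} {k : ℕ}
    {q : ℕ → V} (hq : IsGeod w d x y k q) {i : ℕ} :
    ∀ {j : ℕ}, i < j → j ≤ k → d (q j) y < d (q i) y := by
  intro j hij
  induction j, hij using Nat.le_induction with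
  | base =>
    intro h
    have := hq.step i (by omega)
    have := dist_pos' hd ((hq.adj i (by omega)).ne' hG)
    linarith
  | succ j hj ih =>
    intro h
    have := hq.step j (by omega)
    have := dist_pos' hd ((hq.adj j (by omega)).ne' hG)
    have := ih (by omega)
    linarith

theorem IsGeod.inj (hG : IsWeightedGraph w μ) (hd : IsPathDistance w d) {x y : V} {k : ℕ}
    {q : ℕ → V} (hq : IsGeod w d x y k q) {i j : ℕ} (hi : i ≤ k) (hj : j ≤ k)
    (h : q i = q j) : i = j := by
  rcases lt_trichotomy i j with hij | hij | hij
  · have := hq.anti hG hd hij hj; rw [h] at this; exact absurd this (lt_irrefl _)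
  · exact hij
  · have := hq.anti hG hd hij hi; rw [h] at this; exact absurd this (lt_irrefl _)

theorem IsGeod.between (hd : IsPathDistance w d) {x y : V} {k : ℕ} {q : ℕ → V}
    (hq : IsGeod w d x y k q) {i : ℕ} (hi : i ≤ k) : d x y = d x (q i) + d (q i) y := by
  refine le_antisymm (dist_triangle' hd _ _ _) ?_
  have key : ∀ j ≤ k, d x (q j) ≤ ∑ i ∈ Finset.range j, d (q i) (q (i + 1)) := by
    intro j
    induction j with
    | zero => intro _; simp [hq.start, dist_self' hd]
    | succ j ih =>
      intro hj
      rw [Finset.sum_range_succ]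
      have := ih (by omega)
      have := dist_triangle' hd x (q j) (q (j + 1))
      linarith
  have := key i hi
  have := hq.sum_add i hi
  linarith

end Metric

/-! ### Closed forms along walks of at most three edges -/

section Forms

variable {V : Type*} {w d : V → V → ℝ} {μ : V → ℝ}

/-- Closed 1-forms: antisymmetric functions on edges with vanishing sum along the cycles
of `X₂`, i.e. the harmonic 1-forms without the divergence condition. -/
structure IsClosedForm (w d : V → V → ℝ) (α : V → V → ℝ) : Prop where
  anti : ∀ x y, α x y = -α y x
  supp : ∀ x y, ¬Adj w x y → α x y = 0
  cyc : ∀ (n : ℕ) (c : ZMod (n + 3) → V), IsCycle w c → InX2 w d c →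
          ∑ i, α (c i) (c (i + 1)) = 0

theorem IsClosedForm.self {α : V → V → ℝ} (hα : IsClosedForm w d α) (x : V) : α x x = 0 := by
  have := hα.anti x x; linarith

theorem IsClosedForm.add {α β : V → V → ℝ} (hα : IsClosedForm w d α) (hβ : IsClosedForm w d β) :
    IsClosedForm w d (fun x y => α x y + β x y) where
  anti x y := by rw [hα.anti, hβ.anti]; ring
  supp x y h := by rw [hα.supp x y h, hβ.supp x y h, add_zero]
  cyc n c h1 h2 := by rw [Finset.sum_add_distrib, hα.cyc n c h1 h2, hβ.cyc n c h1 h2, add_zero]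

theorem IsClosedForm.smul {α : V → V → ℝ} (hα : IsClosedForm w d α) (t : ℝ) :
    IsClosedForm w d (fun x y => t * α x y) where
  anti x y := by rw [hα.anti]; ring
  supp x y h := by rw [hα.supp x y h, mul_zero]
  cyc n c h1 h2 := by rw [← Finset.mul_sum, hα.cyc n c h1 h2, mul_zero]

open Classical in
/-- The differential of a function, as a 1-form on edges. -/
noncomputable def dform (w : V → V → ℝ) (φ : V → ℝ) (x y : V) : ℝ :=
  if Adj w x y then φ y - φ x else 0

theorem isClosedForm_dform (hG : IsWeightedGraph w μ) (φ : V → ℝ) :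
    IsClosedForm w d (dform w φ) where
  anti x y := by
    unfold dform
    by_cases h : Adj w x y
    · rw [if_pos h, if_pos (h.symm' hG)]; ring
    · rw [if_neg h, if_neg (fun h' => h (h'.symm' hG))]; ring
  supp x y h := if_neg h
  cyc n c h1 _ := by
    have : ∀ i, dform w φ (c i) (c (i + 1)) = φ (c (i + 1)) - φ (c i) :=
      fun i => if_pos (h1.2 i)
    simp only [this, Finset.sum_sub_distrib]
    rw [sub_eq_zero]
    exact Equiv.sum_comp (Equiv.addRight (1 : ZMod (n + 3))) (fun i => φ (c i))

/-- A closed form sums to zero along the cycle `v, y, r 0, …, r n` closed up by `r (n+1) = v`,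
provided this is a triangle or satisfies the defining conditions of `X₂`. -/
theorem IsClosedForm.cycle_sum {α : V → V → ℝ} (hα : IsClosedForm w d α) (n : ℕ) (r : ℕ → V)
    (v y : V) (hr : r (n + 1) = v) (hy : Adj w y (r 0)) (hv : Adj w v y)
    (hadj : ∀ i ≤ n, Adj w (r i) (r (i + 1)))
    (hinj : ∀ i ≤ n + 1, ∀ j ≤ n + 1, r i = r j → i = j)
    (hyr : ∀ i ≤ n + 1, r i ≠ y)
    (hX : n = 0 ∨ (d v (r 1) < d v y + d y (r 0) + d (r 0) (r 1) ∧
      ∑ i ∈ Finset.range n, d (r (i + 1)) (r (i + 2)) = d (r 1) v)) :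
    α v y + α y (r 0) + ∑ i ∈ Finset.range (n + 1), α (r i) (r (i + 1)) = 0 := by
  let g : ℕ → V := fun i => Nat.casesOn i v (fun j => Nat.casesOn j y r)
  let c : ZMod (n + 3) → V := fun i => g (ZMod.val i)
  have hg0 : g 0 = v := rfl
  have hg1 : g 1 = y := rfl
  have hg2 : ∀ i, g (i + 2) = r i := fun i => rfl
  have hglast : g (n + 3) = g 0 := by rw [hg2 (n + 1), hr, hg0]
  have hc1 : ∀ i : ZMod (n + 3), c (i + 1) = g (ZMod.val i + 1) := by
    intro i
    have hi : ZMod.val i < n + 3 := ZMod.val_lt i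
    by_cases h : ZMod.val i + 1 < n + 3
    · have : ZMod.val (i + 1) = ZMod.val i + 1 := by
        rw [ZMod.val_add, ZMod.val_one'' (show n + 3 ≠ 1 by omega), Nat.mod_eq_of_lt h]
      simp only [c, this]
    · have h' : ZMod.val i + 1 = n + 3 := by omega
      have : ZMod.val (i + 1) = 0 := by
        rw [ZMod.val_add, ZMod.val_one'' (show n + 3 ≠ 1 by omega), h', Nat.mod_self]
      simp only [c, this, h', hglast]
  have hgadj : ∀ i < n + 3, Adj w (g i) (g (i + 1)) := by
    rintro (_ | _ | i) hi
    · exact hv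
    · exact hy
    · exact hadj i (by omega)
  have hginj : ∀ i < n + 3, ∀ j < n + 3, g i = g j → i = j := by
    have hvr : ∀ i ≤ n, v ≠ r i := by
      intro i hi h
      have := hinj (n + 1) le_rfl i (by omega) (by rw [hr, h])
      omega
    have hvy : v ≠ y := by rw [← hr]; exact hyr _ le_rfl
    rintro (_ | _ | i) hi (_ | _ | j) hj h
    · rfl
    · exact absurd h hvy
    · exact absurd h (hvr j (by omega))
    · exact absurd h.symm hvy
    · rfl
    · exact absurd h.symm (hyr j (by omega))
    · exact absurd h.symm (hvr i (by omega))
    · exact absurd h (hyr i (by omega))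
    · have := hinj i (by omega) j (by omega) h
      omega
  have hcyc : IsCycle w c := by
    refine ⟨fun i j h => ?_, fun i => ?_⟩
    · exact ZMod.val_injective _ (hginj _ (ZMod.val_lt i) _ (ZMod.val_lt j) h)
    · rw [hc1]; exact hgadj _ (ZMod.val_lt i)
  have hsum : ∀ F : ℕ → ℝ, ∑ i : ZMod (n + 3), F (ZMod.val i) = ∑ i ∈ Finset.range (n + 3), F i :=
    fun F => Fin.sum_univ_eq_sum_range F (n + 3)
  have hX2 : InX2 w d c := by
    rcases hX with h | ⟨h1, h2⟩
    · exact Or.inl h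
    rcases Nat.eq_zero_or_pos n with hn | hn
    · exact Or.inl hn
    right
    have e1 : ZMod.val (1 : ZMod (n + 3)) = 1 := ZMod.val_one'' (show n + 3 ≠ 1 by omega)
    have e2 : ZMod.val (2 : ZMod (n + 3)) = 2 := by
      have := ZMod.val_natCast_of_lt (show 2 < n + 3 by omega); simpa using this
    have e3 : ZMod.val (3 : ZMod (n + 3)) = 3 := by
      have := ZMod.val_natCast_of_lt (show 3 < n + 3 by omega); simpa using this
    have c0 : c 0 = v := by simp only [c, ZMod.val_zero, hg0]
    have c1 : c 1 = y := by simp only [c, e1, hg1]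
    have c2 : c 2 = r 0 := by simp only [c, e2, hg2]
    have c3 : c 3 = r 1 := by simp only [c, e3]; rfl
    rw [c0, c1, c2, c3]
    refine ⟨h1, ?_⟩
    have hcond : ∀ i : ZMod (n + 3), (i ≠ 0 ∧ i ≠ 1 ∧ i ≠ 2) ↔ 3 ≤ ZMod.val i := by
      intro i
      have h0 : i = 0 ↔ ZMod.val i = 0 := (ZMod.val_eq_zero i).symm
      have h1 : i = 1 ↔ ZMod.val i = 1 := by
        rw [← e1]; exact ⟨fun h => by rw [h], fun h => ZMod.val_injective _ (by rw [h, e1])⟩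
      have h2 : i = 2 ↔ ZMod.val i = 2 := by
        rw [← e2]; exact ⟨fun h => by rw [h], fun h => ZMod.val_injective _ (by rw [h, e2])⟩
      simp only [ne_eq, h0, h1, h2]; omega
    simp only [hcond, hc1, c]
    rw [Finset.sum_filter,
      hsum (fun i => if 3 ≤ i then d (g i) (g (i + 1)) else 0), Finset.sum_range_succ',
      Finset.sum_range_succ', Finset.sum_range_succ']
    simp only [Nat.reduceLeDiff, Nat.reduceAdd, if_false, add_zero]
    rw [← h2]
    refine Finset.sum_congr rfl fun i _ => ?_
    rw [if_pos trivial]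
  have := hα.cyc n c hcyc hX2
  simp only [hc1, c] at this
  rw [hsum (fun i => α (g i) (g (i + 1))), Finset.sum_range_succ', Finset.sum_range_succ'] at this
  simp only [hg0, hg1, hg2, Nat.reduceAdd, zero_add] at this
  linarith

theorem IsClosedForm.triangle {α : V → V → ℝ} (hG : IsWeightedGraph w μ)
    (hα : IsClosedForm w d α) {x y z : V}
    (hxy : Adj w x y) (hyz : Adj w y z) (hzx : Adj w z x) :
    α x y + α y z + α z x = 0 := by
  have := hα.cycle_sum 0 (fun i => Nat.casesOn i z (fun _ => x)) x y rfl hyz hxy ?_ ?_ ?_ (Or.inl rfl)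
  · simpa using this
  · intro i hi
    obtain rfl : i = 0 := by omega
    exact hzx
  · have := hzx.ne' hG
    intro i hi j hj h
    interval_cases i <;> interval_cases j <;> simp_all
  · intro i hi
    have h1 := hxy.ne' hG
    have h2 := hyz.ne' hG
    interval_cases i
    · exact h2.symm
    · exact h1

/-- `s` is an admissible increment of a potential of the form `α` between `u` and `v`: it is
at most `d u v`, and equality forces some first edge of a geodesic from `u` to `v` to be
one on which `α` equals `d`. -/
def Good (w d α : V → V → ℝ) (u v : V) (s : ℝ) : Prop :=
  s ≤ d u v ∧ (s = d u v → u ≠ v → ∃ u1, Adj w u u1 ∧ α u u1 = d u u1 ∧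
    d u v = d u u1 + d u1 v)

theorem good_zero (hd : IsPathDistance w d) (α : V → V → ℝ) (u : V) : Good w d α u u 0 :=
  ⟨(dist_self' hd u).ge, fun _ h => absurd rfl h⟩

theorem good_cons {α : V → V → ℝ} (hb : ∀ x y, Adj w x y → α x y ≤ d x y) {u x v : V} {s : ℝ}
    (hux : Adj w u x) (h : Good w d α x v s) (heq : d u v = d u x + d x v) :
    Good w d α u v (α u x + s) := by
  have h1 := hb u x hux
  have h2 := h.1
  refine ⟨by linarith, fun h3 _ => ⟨x, hux, by linarith, heq⟩⟩

theorem good_edge (hd : IsPathDistance w d) {α : V → V → ℝ}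
    (hb : ∀ x y, Adj w x y → α x y ≤ d x y) {u v : V} (h : Adj w u v) :
    Good w d α u v (α u v) := by
  have := good_cons hb h (good_zero hd α v) (by rw [dist_self' hd, add_zero])
  rwa [add_zero] at this

/-- Along a geodesic the bound `α ≤ d` adds up; in the case of equality already the first edge
is tight. -/
theorem good_geod (hd : IsPathDistance w d) {α : V → V → ℝ}
    (hb : ∀ x y, Adj w x y → α x y ≤ d x y) :
    ∀ (k : ℕ) {u v : V} {q : ℕ → V}, IsGeod w d u v k q →
    Good w d α u v (∑ i ∈ Finset.range k, α (q i) (q (i + 1))) := by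
  intro k
  induction k with
  | zero =>
    intro u v q hq
    have : u = v := hq.start.symm.trans hq.finish
    subst this
    simpa using good_zero hd α u
  | succ k ih =>
    intro u v q hq
    have h1 : IsGeod w d (q 1) v k (fun i => q (i + 1)) :=
      ⟨rfl, hq.finish, fun i hi => hq.adj (i + 1) (by omega),
        fun i hi => hq.step (i + 1) (by omega)⟩
    rw [Finset.sum_range_succ', add_comm]
    have h2 := hq.adj 0 (by omega)
    have h3 := hq.step 0 (by omega)
    rw [hq.start] at h2 h3 ⊢
    exact good_cons hb h2 (ih h1) h3

variable [Fintype V]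

/-- Along a walk `x ∼ y ∼ v` the increment of a closed form is admissible: if the walk is not
geodesic, it closes up with a geodesic from `x` to `v` to a cycle in `X₂`. -/
theorem good_two (hG : IsWeightedGraph w μ) (hconn : GraphConnected w)
    (hd : IsPathDistance w d) {α : V → V → ℝ} (hα : IsClosedForm w d α)
    (hb : ∀ x y, Adj w x y → α x y ≤ d x y) {x y v : V} (hxy : Adj w x y) (hyv : Adj w y v) :
    Good w d α x v (α x y + α y v) := by
  by_cases hxv : x = v
  · subst hxv
    have := good_zero hd α x
    rwa [hα.anti y x, add_neg_cancel]
  by_cases heq : d x v = d x y + d y v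
  · exact good_cons hb hxy (good_edge hd hb hyv) heq
  have hlt : d x v < d x y + d y v := lt_of_le_of_ne (dist_triangle' hd _ _ _) heq
  obtain ⟨k, q, hq⟩ := exists_geod hG hconn hd v x
  have hy : ∀ i ≤ k, q i ≠ y := by
    rintro i hi rfl
    exact heq (hq.between hd hi)
  obtain ⟨n, rfl⟩ : ∃ n, k = n + 1 := by
    cases k with
    | zero => exact absurd (hq.start.symm.trans hq.finish) hxv
    | succ n => exact ⟨n, rfl⟩
  have hs := hα.cycle_sum n q v y hq.finish (by rw [hq.start]; exact hxy.symm' hG)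
    (hyv.symm' hG) (fun i hi => hq.adj i (by omega))
    (fun i hi j hj h => hq.inj hG hd hi hj h) hy (Or.inr ⟨?_, ?_⟩)
  · have := good_geod hd hb _ hq
    rw [hq.start, hα.anti v y, hα.anti y x] at hs
    convert this using 1
    linarith
  · have := hq.step 0 (by omega)
    have h1 := hd.1 v (q 1)
    have h2 := hd.1 v y
    have h3 := hd.1 y x
    have h4 := hd.2.2.1 x (q 1)
    rw [hq.start] at *
    simp only [zero_add] at this
    linarith
  · have h0 := hq.sum hd
    rw [Finset.sum_range_succ'] at h0
    have := hq.step 0 (by omega)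
    rw [hq.start] at *
    simp only [zero_add] at this h0
    linarith

/-- The potential increment of a closed form along a walk of three edges is bounded by the
distance of its endpoints. This is the reason for the choice of `X₂`: a walk of three edges
which is not geodesic closes up to a cycle in `X₂`. -/
theorem good_three (hG : IsWeightedGraph w μ) (hconn : GraphConnected w)
    (hd : IsPathDistance w d) {α : V → V → ℝ} (hα : IsClosedForm w d α)
    (hb : ∀ x y, Adj w x y → α x y ≤ d x y) {u x y v : V} (hux : Adj w u x)
    (hxy : Adj w x y) (hyv : Adj w y v) :
    Good w d α u v (α u x + α x y + α y v) := by
  by_cases huy : u = y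
  · subst huy
    have := good_edge hd hb hyv
    rwa [hα.anti u x, neg_add_cancel, zero_add]
  by_cases hxv : x = v
  · subst hxv
    have := good_edge hd hb hux
    rwa [hα.anti y x, add_neg_cancel_right]
  by_cases huv : u = v
  · subst huv
    rw [hα.triangle hG hux hxy hyv]
    exact good_zero hd α u
  by_cases h1 : d u v = d u x + d x v
  · rw [add_assoc]
    exact good_cons hb hux (good_two hG hconn hd hα hb hxy hyv) h1
  by_cases h2 : d u v = d u y + d y v
  · have h3 := good_two hG hconn hd hα hb hux hxy
    refine ⟨?_, fun h4 _ => ?_⟩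
    · have := h3.1
      have := hb _ _ hyv
      linarith
    · have h5 := hb _ _ hyv
      obtain ⟨u1, a, b, c⟩ := h3.2 (by have := h3.1; linarith) huy
      refine ⟨u1, a, b, le_antisymm (dist_triangle' hd _ _ _) ?_⟩
      have := dist_triangle' hd u1 y v
      linarith
  obtain ⟨k, q, hq⟩ := exists_geod hG hconn hd v u
  have hx' : ∀ i ≤ k, q i ≠ x := by
    rintro i hi rfl
    exact h1 (hq.between hd hi)
  have hy' : ∀ i ≤ k, q i ≠ y := by
    rintro i hi rfl
    exact h2 (hq.between hd hi)
  have hlt : d u v < d u x + d x y + d y v := by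
    have := lt_of_le_of_ne (dist_triangle' hd u x v) h1
    have := dist_triangle' hd x y v
    linarith
  -- the cycle `v, y, x, u = q 0, …, q k = v`
  let r : ℕ → V := fun i => Nat.casesOn i x q
  have hs := hα.cycle_sum k r v y hq.finish (hxy.symm' hG)
    (hyv.symm' hG) ?_ ?_ ?_ (Or.inr ⟨?_, ?_⟩)
  · have := good_geod hd hb _ hq
    rw [Finset.sum_range_succ'] at hs
    have e : ∀ i, r (i + 1) = q i := fun i => rfl
    have e0 : r 0 = x := rfl
    simp only [e, e0, zero_add] at hs
    rw [hq.start, hα.anti v y, hα.anti y x, hα.anti x u] at hs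
    convert this using 1
    linarith
  · rintro (_ | i) hi
    · change Adj w x (q 0)
      rw [hq.start]; exact hux.symm' hG
    · exact hq.adj i (by omega)
  · rintro (_ | i) hi (_ | j) hj h
    · rfl
    · exact absurd h.symm (hx' j (by omega))
    · exact absurd h (hx' i (by omega))
    · have := hq.inj hG hd (i := i) (j := j) (by omega) (by omega) h
      omega
  · rintro (_ | i) hi
    · exact hxy.ne' hG
    · exact hy' i (by omega)
  · change d v (q 0) < d v y + d y x + d x (q 0)
    rw [hq.start]
    have h1 := hd.1 v u
    have h2 := hd.1 v y
    have h3 := hd.1 y x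
    have h4 := hd.1 x u
    linarith
  · change _ = d (q 0) v
    rw [hq.start]
    exact hq.sum hd

/-- `u` lies in the closed unit ball of `x`. -/
def Ball (w : V → V → ℝ) (x u : V) : Prop := u = x ∨ Adj w x u

/-- The form used with curvature: for `x ∼ y` the increment from the ball of `x` to the ball of
`y` is admissible. Since `α x x = 0`, degenerate steps need no separate notation. -/
theorem good_ball (hG : IsWeightedGraph w μ) (hconn : GraphConnected w)
    (hd : IsPathDistance w d) {α : V → V → ℝ} (hα : IsClosedForm w d α)
    (hb : ∀ x y, Adj w x y → α x y ≤ d x y) {u x y v : V} (hux : Ball w x u)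
    (hxy : Adj w x y) (hyv : Ball w y v) :
    Good w d α u v (α u x + α x y + α y v) := by
  rcases hux with rfl | hux <;> rcases hyv with rfl | hyv
  · rw [hα.self, hα.self, zero_add, add_zero]; exact good_edge hd hb hxy
  · rw [hα.self, zero_add]; exact good_two hG hconn hd hα hb hxy hyv
  · rw [hα.self, add_zero]; exact good_two hG hconn hd hα hb (hux.symm' hG) hxy
  · exact good_three hG hconn hd hα hb (hux.symm' hG) hxy hyv

end Forms

/-! ### Comparison inequalities from non-negative curvature -/

section Curvature

variable {V : Type*} [Fintype V] {w d : V → V → ℝ} {μ : V → ℝ}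

/-- For `1`-Lipschitz functions realising the distance of an edge, non-negative curvature
says that the Laplacian does not increase along the edge. -/
theorem lap_le_of_kappa (hG : IsWeightedGraph w μ) (hd : IsPathDistance w d) {x y : V}
    (hxy : Adj w x y) (hk : 0 ≤ kappa w μ d x y) {F : V → ℝ}
    (hF : ∀ u v, F v - F u ≤ d u v) (hFxy : F y - F x = d x y) :
    lap w μ F y ≤ lap w μ F x := by
  classical
  have hpos : 0 < d x y := dist_pos' hd (hxy.ne' hG)
  have hfin : ∀ f : V → ℝ, { r : ℝ | ∃ x y, Adj w x y ∧ r = |grad d f x y| }.Finite := by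
    intro f
    refine (Set.finite_range (fun p : V × V => |grad d f p.1 p.2|)).subset ?_
    rintro r ⟨a, b, _, rfl⟩
    exact ⟨(a, b), rfl⟩
  -- the set defining `kappa` is bounded below, so that the infimum is not a junk value
  have hbdd : BddBelow { r : ℝ | ∃ f : V → ℝ, grad d f y x = 1 ∧ gradNorm w d f = 1 ∧
      r = grad d (lap w μ f) x y } := by
    refine ⟨-(∑ z, w x z / μ x * d x z + ∑ z, w y z / μ y * d y z) / d x y, ?_⟩
    rintro r ⟨f, -, hf, rfl⟩
    have hlip : ∀ a b, Adj w a b → |f b - f a| ≤ d a b := by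
      intro a b hab
      have h1 : |grad d f a b| ≤ 1 := by
        rw [← hf]; exact le_csSup (hfin f).bddAbove ⟨a, b, hab, rfl⟩
      have h2 := dist_pos' hd (hab.ne' hG)
      rw [grad, abs_div, abs_of_pos h2, div_le_one h2, abs_sub_comm] at h1
      exact h1
    have hterm : ∀ a z, |w a z / μ a * (f z - f a)| ≤ w a z / μ a * d a z := by
      intro a z
      have hnn : 0 ≤ w a z / μ a := div_nonneg (hG.nonneg _ _) (hG.mu_pos a).le
      rw [abs_mul, abs_of_nonneg hnn]
      rcases (hG.nonneg a z).eq_or_lt with h0 | h0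
      · rw [← h0]; simp
      · exact mul_le_mul_of_nonneg_left (hlip a z h0) hnn
    have hlap : ∀ a, |lap w μ f a| ≤ ∑ z, w a z / μ a * d a z := fun a =>
      (Finset.abs_sum_le_sum_abs _ _).trans (Finset.sum_le_sum fun z _ => hterm a z)
    unfold grad
    rw [div_le_div_iff_of_pos_right hpos]
    have h1 := abs_le.1 (hlap x)
    have h2 := abs_le.1 (hlap y)
    linarith
  have hgrad : grad d F y x = 1 := by
    rw [grad, hFxy, hd.1 y x, div_self hpos.ne']
  have hnorm : gradNorm w d F = 1 := by
    refine le_antisymm (csSup_le ⟨_, x, y, hxy, rfl⟩ ?_) ?_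
    · rintro r ⟨a, b, hab, rfl⟩
      have h2 := dist_pos' hd (hab.ne' hG)
      rw [grad, abs_div, abs_of_pos h2, div_le_one h2, abs_le]
      have := hF a b
      have := hF b a
      have := hd.1 a b
      constructor <;> linarith
    · refine le_csSup (hfin F).bddAbove ⟨y, x, hxy.symm' hG, ?_⟩
      rw [hgrad, abs_one]
  have := hk.trans (csInf_le hbdd ⟨F, hgrad, hnorm, rfl⟩)
  unfold grad at this
  rw [le_div_iff₀ hpos, zero_mul] at this
  linarith

/-- Dual (Kantorovich) form of non-negative curvature along an edge `x ∼ y`: potentials `A` on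
the ball of `x` and `B` on the ball of `y` that are admissible for the cost `d`
have comparable mean increments, relative to `A x = 0` and `B y = d x y`. -/
theorem curv_compare (hG : IsWeightedGraph w μ) (hd : IsPathDistance w d) {x y : V}
    (hxy : Adj w x y) (hk : 0 ≤ kappa w μ d x y) (A B : V → ℝ) (hA : A x = 0) (hB : B y = d x y)
    (hAB : ∀ u v, Ball w x u → Ball w y v → B v ≤ A u + d u v) :
    ∑ v, w y v / μ y * (B v - d x y) ≤ ∑ u, w x u / μ x * A u := by
  classical
  let S : Finset V := Finset.univ.filter (Ball w x)
  have hS : S.Nonempty := ⟨x, by simp [S, Ball]⟩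
  let F : V → ℝ := fun v => S.inf' hS (fun u => A u + d u v)
  have hF : ∀ u v, F v - F u ≤ d u v := by
    intro u v
    obtain ⟨t, ht, hmin⟩ := Finset.exists_mem_eq_inf' hS (fun t => A t + d t u)
    have h1 : F v ≤ A t + d t v := Finset.inf'_le _ ht
    have h2 : F u = A t + d t u := hmin
    have := dist_triangle' hd t u v
    linarith
  have hFA : ∀ u, Ball w x u → F u ≤ A u := by
    intro u hu
    have h1 : F u ≤ A u + d u u := Finset.inf'_le _ (by simpa [S] using hu)
    rwa [dist_self' hd, add_zero] at h1
  have hFB : ∀ v, Ball w y v → B v ≤ F v := by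
    intro v hv
    refine Finset.le_inf' _ _ (fun u hu => hAB u v (by simpa [S] using hu) hv)
  have h1 := hFA x (Or.inl rfl)
  have h2 := hFB y (Or.inl rfl)
  have h3 := hF x y
  have hx : F x = 0 := by linarith
  have hy : F y = d x y := by linarith
  have key := lap_le_of_kappa hG hd hxy hk hF (by linarith)
  refine le_trans (le_trans ?_ key) ?_
  · refine Finset.sum_le_sum fun v _ => ?_
    have hnn : 0 ≤ w y v / μ y := div_nonneg (hG.nonneg _ _) (hG.mu_pos y).le
    rcases (hG.nonneg y v).eq_or_lt with h0 | h0
    · rw [← h0]; simp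
    · rw [hy]
      exact mul_le_mul_of_nonneg_left (by have := hFB v (Or.inr h0); linarith) hnn
  · refine Finset.sum_le_sum fun v _ => ?_
    have hnn : 0 ≤ w x v / μ x := div_nonneg (hG.nonneg _ _) (hG.mu_pos x).le
    rcases (hG.nonneg x v).eq_or_lt with h0 | h0
    · rw [← h0]; simp
    · rw [hx]
      exact mul_le_mul_of_nonneg_left (by have := hFA v (Or.inr h0); linarith) hnn

/-- Harmonic forms: closed forms without divergence, i.e. the elements of `H1set`. -/
structure IsHarm (w : V → V → ℝ) (μ : V → ℝ) (d α : V → V → ℝ) : Prop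
    extends IsClosedForm w d α where
  coclosed : ∀ x, ∑ y, w x y / μ x * α x y = 0

/-- The edges on which a form attains the value of the distance. -/
def Tight (w d α : V → V → ℝ) (x y : V) : Prop := Adj w x y ∧ α x y = d x y

/-- Along a tight edge the divergence of a closed form bounded by `d` does not increase: by
`good_ball`, the local potentials of the form around the edge are admissible in
`curv_compare`. -/
theorem closed_compare (hG : IsWeightedGraph w μ) (hconn : GraphConnected w)
    (hd : IsPathDistance w d) (hk : NonnegCurv w μ d) {α : V → V → ℝ}
    (hα : IsClosedForm w d α) (hb : ∀ x y, Adj w x y → α x y ≤ d x y) {x y : V}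
    (ht : Tight w d α x y) :
    ∑ v, w y v / μ y * α y v ≤ ∑ u, w x u / μ x * α x u := by
  have := curv_compare hG hd ht.1 (hk x y ht.1) (α x) (fun v => d x y + α y v) (hα.self x)
    (by simp [hα.self]) (fun u v hu hv => by
      have := (good_ball hG hconn hd hα hb hu ht.1 hv).1
      rw [ht.2, hα.anti u x] at this
      linarith)
  simpa using this

theorem sum_dform (hG : IsWeightedGraph w μ) (φ : V → ℝ) (x : V) :
    ∑ y, w x y / μ x * dform w φ x y = lap w μ φ x := by
  refine Finset.sum_congr rfl fun y _ => ?_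
  unfold dform
  split_ifs with h
  · rfl
  · have : w x y = 0 := le_antisymm (not_lt.1 h) (hG.nonneg x y)
    rw [this]; simp

/-- First variation of the curvature inequality. If `φ` has slope at least `θ` on all tight
edges of a harmonic form `α`, with equality at a tight edge `x → y`, then
`α - s dφ` has slope at most `1 - s θ` for small `s > 0`, attained at `x → y`. -/
theorem lap_le_of_tight (hG : IsWeightedGraph w μ) (hconn : GraphConnected w)
    (hd : IsPathDistance w d) (hk : NonnegCurv w μ d) {α : V → V → ℝ}
    (hα : IsHarm w μ d α) (hb : ∀ x y, Adj w x y → α x y ≤ d x y) {x y : V}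
    (ht : Tight w d α x y) (φ : V → ℝ) (θ : ℝ)
    (hφ : ∀ u v, Tight w d α u v → θ * d u v ≤ φ v - φ u) (hxy : φ y - φ x = θ * d x y) :
    lap w μ φ x ≤ lap w μ φ y := by
  have hev : ∀ᶠ s in nhdsWithin (0 : ℝ) (Set.Ioi 0), (0 < 1 - s * θ) ∧
      ∀ u v, Adj w u v → α u v - s * (φ v - φ u) ≤ (1 - s * θ) * d u v := by
    refine Filter.Eventually.and ?_ ?_
    · have : Filter.Tendsto (fun s : ℝ => 1 - s * θ) (nhds 0) (nhds (1 - 0 * θ)) :=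
        (by fun_prop : Continuous fun s : ℝ => 1 - s * θ).tendsto 0
      exact (this.eventually (lt_mem_nhds (by simp))).filter_mono nhdsWithin_le_nhds
    · rw [Filter.eventually_all]; intro u
      rw [Filter.eventually_all]; intro v
      by_cases huv : Adj w u v
      swap
      · exact Filter.Eventually.of_forall fun s h => absurd h huv
      by_cases htt : α u v = d u v
      · filter_upwards [self_mem_nhdsWithin] with s hs _
        have := mul_le_mul_of_nonneg_left (hφ u v ⟨huv, htt⟩) (le_of_lt hs)
        rw [htt]; linarith
      · have hlt := lt_of_le_of_ne (hb u v huv) htt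
        have : Filter.Tendsto (fun s : ℝ => (1 - s * θ) * d u v - (α u v - s * (φ v - φ u)))
            (nhds 0) (nhds ((1 - 0 * θ) * d u v - (α u v - 0 * (φ v - φ u)))) :=
          (by fun_prop : Continuous fun s : ℝ =>
            (1 - s * θ) * d u v - (α u v - s * (φ v - φ u))).tendsto 0
        filter_upwards [(this.eventually (lt_mem_nhds (a := 0) (by simpa using hlt))).filter_mono
          nhdsWithin_le_nhds] with s hs _
        linarith
  obtain ⟨s, ⟨h1, h2⟩, hs⟩ := (hev.and self_mem_nhdsWithin).exists
  have hs : 0 < s := hs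
  set M := 1 - s * θ with hM
  have hcl : IsClosedForm w d (fun a b => M⁻¹ * (α a b + (-s) * dform w φ a b)) :=
    (hα.toIsClosedForm.add ((isClosedForm_dform hG φ).smul (-s))).smul M⁻¹
  have hdf : ∀ {a b}, Adj w a b → dform w φ a b = φ b - φ a := fun h => if_pos h
  have := closed_compare hG hconn hd hk hcl (fun a b hab => by
      rw [hdf hab, inv_mul_le_iff₀ h1]
      have := h2 a b hab
      linarith) (x := x) (y := y) ⟨ht.1, by
      show M⁻¹ * (α x y + (-s) * dform w φ x y) = d x y
      rw [hdf ht.1, inv_mul_eq_iff_eq_mul₀ h1.ne', hxy, ht.2, hM]; ring⟩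
  have hsum : ∀ a, ∑ b, w a b / μ a * (M⁻¹ * (α a b + (-s) * dform w φ a b))
      = M⁻¹ * (-s) * lap w μ φ a := by
    intro a
    rw [← sum_dform hG, Finset.mul_sum]
    have h0 := hα.coclosed a
    calc _ = ∑ b, (M⁻¹ * (w a b / μ a * α a b)
          + M⁻¹ * (-s) * (w a b / μ a * dform w φ a b)) :=
          Finset.sum_congr rfl fun b _ => by ring
      _ = _ := by rw [Finset.sum_add_distrib, ← Finset.mul_sum, h0]; simp
  rw [hsum, hsum] at this
  have hc : 0 < M⁻¹ * s := mul_pos (inv_pos.2 h1) hs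
  nlinarith

end Curvature

/-! ### The maximum of a harmonic form is attained everywhere -/

section Tight

variable {V : Type*} [Fintype V] {w d : V → V → ℝ} {μ : V → ℝ}

/-- A property which passes to neighbours and holds at one vertex holds at all vertices. -/
theorem conn_induction {V : Type*} {w : V → V → ℝ} (hconn : GraphConnected w) {P : V → Prop} {x : V}
    (hx : P x) (hstep : ∀ u v, P u → Adj w u v → P v) (y : V) : P y := by
  obtain ⟨n, c, h0, hl, hadj⟩ := hconn x y
  have : ∀ i : Fin (n + 1), P (c i) := by
    intro i
    induction i using Fin.induction with
    | zero => rwa [h0]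
    | succ i ih => exact hstep _ _ ih (hadj i)
  rw [← hl]; exact this _

/-- Green's formula for `⟨φ, Δ φ⟩`. -/
theorem green (hG : IsWeightedGraph w μ) (φ : V → ℝ) :
    2 * ∑ x, μ x * (φ x * lap w μ φ x) = -∑ x, ∑ y, w x y * (φ y - φ x) ^ 2 := by
  have h1 : ∑ x, μ x * (φ x * lap w μ φ x) = ∑ x, ∑ y, w x y * (φ x * (φ y - φ x)) := by
    refine Finset.sum_congr rfl fun x _ => ?_
    rw [lap, Finset.mul_sum, Finset.mul_sum]
    refine Finset.sum_congr rfl fun y _ => ?_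
    have := (hG.mu_pos x).ne'
    field_simp
  have h2 : ∑ x, μ x * (φ x * lap w μ φ x) = ∑ x, ∑ y, w x y * (φ y * (φ x - φ y)) := by
    rw [h1, Finset.sum_comm]
    refine Finset.sum_congr rfl fun x _ => Finset.sum_congr rfl fun y _ => ?_
    rw [hG.symm]
  rw [two_mul]
  nth_rewrite 1 [h1]
  rw [h2, ← Finset.sum_add_distrib, ← Finset.sum_neg_distrib]
  refine Finset.sum_congr rfl fun x _ => ?_
  rw [← Finset.sum_add_distrib, ← Finset.sum_neg_distrib]
  refine Finset.sum_congr rfl fun y _ => ?_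
  ring

/-- The tight edges of a harmonic form contain a directed cycle. Otherwise there are functions
growing by at least `d` along tight edges; moving the one of least `L²(μ)` norm
along the heat flow keeps this property and decreases the norm. -/
theorem exists_tight_cycle (hG : IsWeightedGraph w μ) (hconn : GraphConnected w)
    (hd : IsPathDistance w d) (hk : NonnegCurv w μ d) {α : V → V → ℝ}
    (hα : IsHarm w μ d α) (hb : ∀ x y, Adj w x y → α x y ≤ d x y) {x0 y0 : V}
    (ht : Tight w d α x0 y0) : ∃ v, Relation.TransGen (Tight w d α) v v := by
  classical
  by_contra! hno
  let F : Set (V → ℝ) := {φ | ∀ u v, Tight w d α u v → d u v ≤ φ v - φ u}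
  let Q : (V → ℝ) → ℝ := fun φ => ∑ v, μ v * φ v ^ 2
  have hQc : Continuous Q := by fun_prop
  have hFc : IsClosed F := by
    have : F = ⋂ u, ⋂ v, ⋂ (_ : Tight w d α u v), {φ : V → ℝ | d u v ≤ φ v - φ u} := by
      ext φ; simp [F]
    rw [this]
    refine isClosed_iInter fun u => isClosed_iInter fun v => isClosed_iInter fun _ => ?_
    exact isClosed_le continuous_const (by fun_prop)
  -- without tight cycles, counting the tight predecessors gives an element of `F`
  have hF0 : ∃ φ, φ ∈ F := by
    let D := ∑ u, ∑ v, d u v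
    have hD : ∀ u v, d u v ≤ D := fun u v =>
      (Finset.single_le_sum (f := fun v => d u v) (fun i _ => hd.2.2.1 u i)
        (Finset.mem_univ v)).trans
      (Finset.single_le_sum (f := fun u => ∑ v, d u v)
        (fun i _ => Finset.sum_nonneg fun j _ => hd.2.2.1 i j) (Finset.mem_univ u))
    let S : V → Finset V := fun v => univ.filter fun t => Relation.TransGen (Tight w d α) t v
    refine ⟨fun v => D * (S v).card, fun u v huv => ?_⟩
    have h1 : insert u (S u) ⊆ S v := by
      intro t ht
      simp only [S, Finset.mem_insert, Finset.mem_filter, Finset.mem_univ, true_and] at ht ⊢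
      rcases ht with rfl | ht
      · exact .single huv
      · exact ht.tail huv
    have h2 := Finset.card_le_card h1
    rw [Finset.card_insert_of_notMem (by simpa [S] using hno u)] at h2
    have h3 : ((S u).card : ℝ) + 1 ≤ (S v).card := by exact_mod_cast h2
    have h4 := hD u v
    have h5 : 0 ≤ D := (hd.2.2.1 u v).trans h4
    nlinarith
  obtain ⟨φ0, hφ0⟩ := hF0
  -- a minimiser of `Q` on `F`, by compactness of sublevel sets
  have hK : IsCompact (F ∩ {φ | Q φ ≤ Q φ0}) := by
    refine (isCompact_Icc (a := fun v => -(Q φ0 / μ v + 1))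
      (b := fun v => Q φ0 / μ v + 1)).of_isClosed_subset
      (hFc.inter (isClosed_le hQc continuous_const)) ?_
    rintro φ ⟨-, hφ⟩
    have hφ : Q φ ≤ Q φ0 := hφ
    have : ∀ v, |φ v| ≤ Q φ0 / μ v + 1 := by
      intro v
      have h1 : μ v * φ v ^ 2 ≤ Q φ0 :=
        (Finset.single_le_sum (f := fun v => μ v * φ v ^ 2)
          (fun i _ => mul_nonneg (hG.mu_pos i).le (sq_nonneg _)) (Finset.mem_univ v)).trans hφ
      have h2 : φ v ^ 2 ≤ Q φ0 / μ v := by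
        rw [le_div_iff₀ (hG.mu_pos v)]; linarith
      rw [← sq_abs] at h2
      nlinarith [sq_nonneg (|φ v| - 1), abs_nonneg (φ v)]
    exact ⟨fun v => (abs_le.1 (this v)).1, fun v => (abs_le.1 (this v)).2⟩
  obtain ⟨φ, ⟨hφF, hφQ⟩, hmin⟩ := hK.exists_isMinOn ⟨φ0, hφ0, le_refl (Q φ0)⟩ hQc.continuousOn
  have hmin' : ∀ ψ ∈ F, Q φ ≤ Q ψ := by
    intro ψ hψ
    rcases le_total (Q ψ) (Q φ0) with h | h
    · exact hmin ⟨hψ, h⟩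
    · exact le_trans hφQ h
  -- the energy is positive since `φ` is not constant
  have hE : ∑ x, μ x * (φ x * lap w μ φ x) < 0 := by
    have h1 := green hG φ
    have h2 : 0 < ∑ x, ∑ y, w x y * (φ y - φ x) ^ 2 := by
      have hnn : ∀ x y, 0 ≤ w x y * (φ y - φ x) ^ 2 :=
        fun x y => mul_nonneg (hG.nonneg _ _) (sq_nonneg _)
      have h3 := hφF _ _ ht
      have h4 := dist_pos' hd (ht.1.ne' hG)
      have h5 : 0 < w x0 y0 * (φ y0 - φ x0) ^ 2 := mul_pos ht.1 (pow_pos (by linarith) 2)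
      refine lt_of_lt_of_le h5 ((Finset.single_le_sum (f := fun y => w x0 y * (φ y - φ x0) ^ 2)
        (fun i _ => hnn x0 i) (Finset.mem_univ y0)).trans
        (Finset.single_le_sum (f := fun x => ∑ y, w x y * (φ y - φ x) ^ 2)
        (fun i _ => Finset.sum_nonneg fun j _ => hnn i j) (Finset.mem_univ x0)))
    linarith
  set E := ∑ x, μ x * (φ x * lap w μ φ x) with hEdef
  -- `φ + c Δφ` stays in `F` for small `c > 0` by `lap_le_of_tight` with `θ = 1`
  have hev : ∀ᶠ c in nhdsWithin (0 : ℝ) (Set.Ioi 0),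
      (2 * E + c * ∑ x, μ x * lap w μ φ x ^ 2 < 0) ∧
      ∀ u v, Tight w d α u v →
        d u v ≤ (φ v + c * lap w μ φ v) - (φ u + c * lap w μ φ u) := by
    refine Filter.Eventually.and ?_ ?_
    · have : Filter.Tendsto (fun c : ℝ => 2 * E + c * ∑ x, μ x * lap w μ φ x ^ 2) (nhds 0)
          (nhds (2 * E + 0 * ∑ x, μ x * lap w μ φ x ^ 2)) :=
        (by fun_prop : Continuous fun c : ℝ =>
          2 * E + c * ∑ x, μ x * lap w μ φ x ^ 2).tendsto 0
      exact (this.eventually (gt_mem_nhds (by linarith))).filter_mono nhdsWithin_le_nhds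
    · rw [Filter.eventually_all]; intro u
      rw [Filter.eventually_all]; intro v
      by_cases huv : Tight w d α u v
      swap
      · exact Filter.Eventually.of_forall fun s h => absurd h huv
      by_cases heq : φ v - φ u = d u v
      · have h1 := lap_le_of_tight hG hconn hd hk hα hb huv φ 1
          (fun a b hab => by rw [one_mul]; exact hφF a b hab) (by rw [one_mul, heq])
        filter_upwards [self_mem_nhdsWithin] with s hs _
        have := mul_le_mul_of_nonneg_left h1 (le_of_lt hs)
        linarith
      · have hlt := lt_of_le_of_ne (hφF u v huv) (Ne.symm heq)
        have : Filter.Tendsto (fun c : ℝ => (φ v + c * lap w μ φ v) - (φ u + c * lap w μ φ u))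
            (nhds 0) (nhds ((φ v + 0 * lap w μ φ v) - (φ u + 0 * lap w μ φ u))) :=
          (by fun_prop : Continuous fun c : ℝ =>
            (φ v + c * lap w μ φ v) - (φ u + c * lap w μ φ u)).tendsto 0
        filter_upwards [(this.eventually (lt_mem_nhds (a := d u v)
          (by simpa using hlt))).filter_mono nhdsWithin_le_nhds] with s hs _
        exact hs.le
  obtain ⟨c, ⟨h1, h2⟩, hc⟩ := (hev.and self_mem_nhdsWithin).exists
  have hc : 0 < c := hc
  have h3 := hmin' (fun v => φ v + c * lap w μ φ v) h2
  have h4 : Q (fun v => φ v + c * lap w μ φ v)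
      = Q φ + c * (2 * E + c * ∑ x, μ x * lap w μ φ x ^ 2) := by
    simp only [Q, hEdef]
    rw [mul_add, Finset.mul_sum, Finset.mul_sum, Finset.mul_sum, Finset.mul_sum,
      ← Finset.sum_add_distrib, ← Finset.sum_add_distrib]
    refine Finset.sum_congr rfl fun x _ => ?_
    ring
  have h5 := mul_neg_of_pos_of_neg hc h1
  linarith

/-- The vertices from which a directed cycle of tight edges can be reached. -/
def Rec (w d α : V → V → ℝ) (x : V) : Prop :=
  ∃ u, Relation.ReflTransGen (Tight w d α) x u ∧ Relation.TransGen (Tight w d α) u u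

open Classical in
/-- The rate `∑_{y ∈ U} p(x,y)` of jumping from `x` into `U`. -/
noncomputable def jump (w : V → V → ℝ) (μ : V → ℝ) (U : Set V) (x : V) : ℝ :=
  ∑ y, if y ∈ U then w x y / μ x else 0

/-- The rate of jumping into a set `U` of non-recurrent vertices, closed under tight edges, is
monotone along tight paths in `Rec`: `lap_le_of_tight` for the indicator function of `U`,
with `θ = 0`. -/
theorem jump_mono (hG : IsWeightedGraph w μ) (hconn : GraphConnected w)
    (hd : IsPathDistance w d) (hk : NonnegCurv w μ d) {α : V → V → ℝ}
    (hα : IsHarm w μ d α) (hb : ∀ x y, Adj w x y → α x y ≤ d x y) {U : Set V}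
    (hU : ∀ u v, u ∈ U → Tight w d α u v → v ∈ U) (hUC : ∀ u ∈ U, ¬ Rec w d α u) {x y : V}
    (hxy : Relation.ReflTransGen (Tight w d α) x y) (hy : Rec w d α y) :
    jump w μ U x ≤ jump w μ U y := by
  classical
  induction hxy using Relation.ReflTransGen.head_induction_on with
  | refl => exact le_rfl
  | head hab hbc ih =>
    rename_i a b
    refine le_trans ?_ ih
    have hb' : Rec w d α b := by
      obtain ⟨u, h1, h2⟩ := hy
      exact ⟨u, hbc.trans h1, h2⟩
    have ha' : Rec w d α a := by
      obtain ⟨u, h1, h2⟩ := hb'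
      exact ⟨u, h1.head hab, h2⟩
    have haU : a ∉ U := fun h => hUC a h ha'
    have hbU : b ∉ U := fun h => hUC b h hb'
    have key := lap_le_of_tight hG hconn hd hk hα hb hab (fun v => if v ∈ U then 1 else 0) 0
      (fun u v huv => by
        have := hU u v
        by_cases h1 : u ∈ U
        · simp [h1, this h1 huv]
        · simp only [h1, if_false]
          split_ifs <;> simp) (by simp [haU, hbU])
    have hl : ∀ c, c ∉ U → lap w μ (fun v => if v ∈ U then 1 else 0) c = jump w μ U c := by
      intro c hc
      unfold lap jump
      refine Finset.sum_congr rfl fun v _ => ?_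
      simp only [hc, if_false]
      split_ifs <;> simp
    rwa [hl a haU, hl b hbU] at key

/-- Neighbours of vertices on a tight cycle lie in `Rec`: a neighbour outside would be adjacent
to the whole cycle, and closedness on triangles would make the form decrease around it. -/
theorem rec_of_adj_cycle (hG : IsWeightedGraph w μ) (hconn : GraphConnected w)
    (hd : IsPathDistance w d) (hk : NonnegCurv w μ d) {α : V → V → ℝ}
    (hα : IsHarm w μ d α) (hb : ∀ x y, Adj w x y → α x y ≤ d x y) {c z : V}
    (hc : Relation.TransGen (Tight w d α) c c) (hcz : Adj w c z) : Rec w d α z := by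
  classical
  by_contra hz
  let U : Set V := {u | Relation.ReflTransGen (Tight w d α) z u}
  have hUrec : ∀ u ∈ U, ¬ Rec w d α u := by
    rintro u hu ⟨v, h1, h2⟩
    exact hz ⟨v, Relation.ReflTransGen.trans hu h1, h2⟩
  have hU : ∀ u v, u ∈ U → Tight w d α u v → v ∈ U :=
    fun u v hu huv => Relation.ReflTransGen.tail hu huv
  have hU' : ∀ u v, u ∈ U \ {z} → Tight w d α u v → v ∈ U \ {z} := by
    rintro u v ⟨hu, -⟩ huv
    refine ⟨hU u v hu huv, ?_⟩
    rintro rfl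
    exact hz ⟨v, .refl, Relation.TransGen.tail' hu huv⟩
  have hcrec : Rec w d α c := ⟨c, .refl, hc⟩
  have hp : ∀ x, w x z / μ x = jump w μ U x - jump w μ (U \ {z}) x := by
    intro x
    unfold jump
    rw [← Finset.sum_sub_distrib, Finset.sum_eq_single z]
    · have : z ∈ U := Relation.ReflTransGen.refl
      simp [this]
    · intro b _ hb
      simp [hb]
    · simp
  -- the rate into `U` can only grow from `c` to `u`, that into `U \ {z}` only from `u` to `c`
  have hadj : ∀ u, Relation.ReflTransGen (Tight w d α) c u →
      Relation.ReflTransGen (Tight w d α) u c → Adj w u z := by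
    intro u h1 h2
    have hur : Rec w d α u := ⟨c, h2, hc⟩
    have e1 := jump_mono hG hconn hd hk hα hb hU hUrec h1 hur
    have e2 := jump_mono hG hconn hd hk hα hb hU' (fun v hv => hUrec v hv.1) h2 hcrec
    have e3 : 0 < w c z / μ c := div_pos hcz (hG.mu_pos c)
    have e4 : 0 < w u z / μ u := by
      rw [hp] at e3 ⊢; linarith
    rcases (hG.nonneg u z).eq_or_lt with h | h
    · rw [← h, zero_div] at e4; exact absurd e4 (lt_irrefl _)
    · exact h
  have hstep : ∀ u v, Tight w d α u v → Adj w u z → Adj w v z → α v z < α u z := by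
    intro u v huv hu hv
    have := hα.triangle hG huv.1 hv (hu.symm' hG)
    have h2 := dist_pos' hd (huv.1.ne' hG)
    rw [huv.2, hα.anti z u] at this
    linarith
  have key : ∀ u, Relation.TransGen (Tight w d α) c u →
      Relation.ReflTransGen (Tight w d α) u c → α u z < α c z := by
    intro u hu
    induction hu with
    | single h => exact fun h2 => hstep _ _ h hcz (hadj _ (.single h) h2)
    | tail h1 h2 ih =>
      intro h3
      have h4 := h3.head h2
      exact (hstep _ _ h2 (hadj _ h1.to_reflTransGen h4)
        (hadj _ (h1.to_reflTransGen.tail h2) h3)).trans (ih h4)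
  exact lt_irrefl _ (key c hc .refl)

/-- If a `1`-bounded harmonic form attains the bound somewhere, it attains it at every vertex. -/
theorem exists_tight_out (hG : IsWeightedGraph w μ) (hconn : GraphConnected w)
    (hd : IsPathDistance w d) (hk : NonnegCurv w μ d) {α : V → V → ℝ}
    (hα : IsHarm w μ d α) (hb : ∀ x y, Adj w x y → α x y ≤ d x y) {x0 y0 : V}
    (ht : Tight w d α x0 y0) (x : V) : ∃ y, Tight w d α x y := by
  classical
  obtain ⟨c, hc⟩ := exists_tight_cycle hG hconn hd hk hα hb ht
  have hrec : Rec w d α x := by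
    refine conn_induction hconn (P := Rec w d α) (x := c) ⟨c, .refl, hc⟩ ?_ x
    intro u v hu huv
    by_contra hv
    let U : Set V := {t | Relation.ReflTransGen (Tight w d α) v t}
    have hUrec : ∀ t ∈ U, ¬ Rec w d α t := by
      rintro t ht ⟨t', h1, h2⟩
      exact hv ⟨t', Relation.ReflTransGen.trans ht h1, h2⟩
    obtain ⟨c', h1, h2⟩ := hu
    have hm := jump_mono hG hconn hd hk hα hb (U := U)
      (fun a b ha hab => Relation.ReflTransGen.tail ha hab) hUrec h1 ⟨c', .refl, h2⟩
    have hpos : 0 < jump w μ U u := by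
      refine Finset.sum_pos' (fun y _ => ?_) ⟨v, Finset.mem_univ v, ?_⟩
      · split_ifs
        · exact div_nonneg (hG.nonneg _ _) (hG.mu_pos u).le
        · exact le_rfl
      · have : v ∈ U := Relation.ReflTransGen.refl
        rw [if_pos this]
        exact div_pos huv (hG.mu_pos u)
    obtain ⟨t, -, ht⟩ := Finset.exists_ne_zero_of_sum_ne_zero (hpos.trans_le hm).ne'
    have htU : t ∈ U := by
      by_contra h; simp [h] at ht
    rw [if_pos htU] at ht
    have : Adj w c' t := by
      refine lt_of_le_of_ne (hG.nonneg _ _) fun h => ht ?_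
      rw [← h, zero_div]
    exact hUrec t htU (rec_of_adj_cycle hG hconn hd hk hα hb h2 this)
  obtain ⟨u, h1, h2⟩ := hrec
  rcases Relation.ReflTransGen.cases_head h1 with rfl | ⟨y, hy, -⟩
  · obtain ⟨y, hy, -⟩ := Relation.TransGen.head'_iff.1 h2
    exact ⟨y, hy⟩
  · exact ⟨y, hy⟩

theorem exists_adj (hconn : GraphConnected w) (hd : IsPathDistance w d) {x' y' : V}
    (h : x' ≠ y') (x : V) : ∃ y, Adj w x y := by
  by_cases hx : x = x'
  · obtain ⟨u, hu, -⟩ := exists_first_step hconn hd (x := x) (y := y') (by rwa [hx])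
    exact ⟨u, hu⟩
  · obtain ⟨u, hu, -⟩ := exists_first_step hconn hd hx
    exact ⟨u, hu⟩

theorem IsHarm.smul {α : V → V → ℝ} (hα : IsHarm w μ d α) (t : ℝ) :
    IsHarm w μ d (fun x y => t * α x y) where
  toIsClosedForm := hα.toIsClosedForm.smul t
  coclosed x := by
    have : ∀ y, w x y / μ x * (t * α x y) = t * (w x y / μ x * α x y) := fun y => by ring
    simp only [this]
    rw [← Finset.mul_sum, hα.coclosed, mul_zero]

/-- The maximum of `α / d` over all edges is attained at every vertex. -/
theorem max_everywhere (hG : IsWeightedGraph w μ) (hconn : GraphConnected w)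
    (hd : IsPathDistance w d) (hk : NonnegCurv w μ d) {α : V → V → ℝ}
    (hα : IsHarm w μ d α) {x' y' : V} (h' : Adj w x' y') (x : V) :
    ∃ y, Adj w x y ∧ α x' y' / d x' y' ≤ α x y / d x y := by
  classical
  let S : Finset (V × V) := univ.filter fun p => Adj w p.1 p.2
  obtain ⟨p, hp, hmax⟩ := S.exists_max_image (fun p => α p.1 p.2 / d p.1 p.2)
    ⟨(x', y'), by simpa [S] using h'⟩
  have hp : Adj w p.1 p.2 := by simpa [S] using hp
  have hmax : ∀ a b, Adj w a b → α a b / d a b ≤ α p.1 p.2 / d p.1 p.2 :=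
    fun a b hab => hmax (a, b) (by simpa [S] using hab)
  set M := α p.1 p.2 / d p.1 p.2 with hM
  rcases le_or_gt M 0 with hM0 | hM0
  · obtain ⟨y, hy⟩ := exists_adj hconn hd (h'.ne' hG) x
    refine ⟨y, hy, ?_⟩
    have h1 := hmax _ _ h'
    have h2 := hmax _ _ (hy.symm' hG)
    rw [hα.anti y x, hd.1 y x, neg_div] at h2
    linarith
  · have hbM : ∀ a b, Adj w a b → α a b ≤ M * d a b := by
      intro a b hab
      have := hmax a b hab
      rwa [div_le_iff₀ (dist_pos' hd (hab.ne' hG))] at this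
    obtain ⟨y, hy, hy2⟩ := exists_tight_out hG hconn hd hk (hα.smul M⁻¹)
      (fun a b hab => by rw [inv_mul_le_iff₀ hM0]; exact hbM a b hab)
      (x0 := p.1) (y0 := p.2) ⟨hp, by
        show M⁻¹ * α p.1 p.2 = d p.1 p.2
        rw [inv_mul_eq_iff_eq_mul₀ hM0.ne', hM,
          div_mul_cancel₀ _ (dist_pos' hd (hp.ne' hG)).ne']⟩ x
    refine ⟨y, hy, ?_⟩
    have h3 := dist_pos' hd (hy.ne' hG)
    rw [inv_mul_eq_iff_eq_mul₀ hM0.ne'] at hy2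
    rw [hy2, mul_div_cancel_right₀ _ h3.ne']
    exact hmax _ _ h'

end Tight

/-! ### Exposed functionals and the coordinate frame -/

section Exposed

variable {W : Type*} [AddCommGroup W] [Module ℝ W]

/-- `e ∈ L` is exposed if some vector has `e` as its unique maximiser among the functionals
in `L`; that is, `e` is an exposed point of the convex hull of `L`. -/
def Exposed (L : Set (Module.Dual ℝ W)) (e : Module.Dual ℝ W) : Prop :=
  e ∈ L ∧ ∃ a, ∀ l ∈ L, l ≠ e → l a < e a

theorem Exposed.neg {L : Set (Module.Dual ℝ W)} (hneg : ∀ l ∈ L, -l ∈ L)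
    {e : Module.Dual ℝ W} (he : Exposed L e) : Exposed L (-e) := by
  obtain ⟨h1, a, ha⟩ := he
  refine ⟨hneg e h1, -a, fun l hl hne => ?_⟩
  have := ha (-l) (hneg l hl) (fun h => hne (by rw [← h, neg_neg]))
  simpa using this

/-- Every direction is maximised, up to perturbation, by an exposed functional. -/
theorem exists_exposed_pos {L : Set (Module.Dual ℝ W)} (hfin : L.Finite)
    {l0 : Module.Dual ℝ W} (hl0 : l0 ∈ L) (a : W) : ∃ e, Exposed L e ∧ l0 a ≤ e a := by
  classical
  have : Finite L := hfin
  -- a generic direction `b`, on which distinct functionals of `L` differ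
  obtain ⟨b, hb⟩ := Module.Dual.exists_forall_ne_zero_of_forall_exists
    (ι := {p : L × L // p.1 ≠ p.2}) (K := ℝ) (M := W)
    (fun p => (p.1.1 : Module.Dual ℝ W) - p.1.2) (by
      rintro ⟨⟨p, q⟩, hpq⟩
      by_contra! h
      refine hpq (Subtype.ext (LinearMap.ext fun x => ?_))
      have := h x
      simpa [sub_eq_zero] using this)
  have hb' : ∀ p ∈ L, ∀ q ∈ L, p ≠ q → p b ≠ q b := by
    intro p hp q hq hpq h
    exact hb ⟨(⟨p, hp⟩, ⟨q, hq⟩), fun h => hpq (congrArg Subtype.val h)⟩ (by simp [h])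
  obtain ⟨m, hm, hmax⟩ := Set.exists_max_image L (fun l => l a) hfin ⟨l0, hl0⟩
  obtain ⟨e, ⟨heL, hea⟩, hemax⟩ := Set.exists_max_image (L ∩ {l | l a = m a}) (fun l => l b)
    (hfin.subset Set.inter_subset_left) ⟨m, hm, rfl⟩
  have hea : e a = m a := hea
  refine ⟨e, ⟨heL, ?_⟩, by rw [hea]; exact hmax l0 hl0⟩
  have hev : ∀ᶠ s in nhdsWithin (0 : ℝ) (Set.Ioi 0), ∀ l ∈ L, l ≠ e →
      l a + s * l b < e a + s * e b := by
    rw [hfin.eventually_all]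
    intro l hl
    by_cases hle : l = e
    · exact Filter.Eventually.of_forall fun s h => absurd hle h
    by_cases hla : l a = m a
    · have h1 := lt_of_le_of_ne (hemax l ⟨hl, hla⟩) (hb' l hl e heL hle)
      filter_upwards [self_mem_nhdsWithin] with s hs _
      rw [hla, hea]
      have := mul_lt_mul_of_pos_left h1 hs
      linarith
    · have hlt : l a < e a := by rw [hea]; exact lt_of_le_of_ne (hmax l hl) hla
      have : Filter.Tendsto (fun s : ℝ => (e a + s * e b) - (l a + s * l b))
          (nhds 0) (nhds ((e a + 0 * e b) - (l a + 0 * l b))) :=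
        (by fun_prop : Continuous fun s : ℝ => (e a + s * e b) - (l a + s * l b)).tendsto 0
      filter_upwards [(this.eventually (lt_mem_nhds (a := 0) (by simpa using hlt))).filter_mono
        nhdsWithin_le_nhds] with s hs _
      linarith
  obtain ⟨s, hs⟩ := hev.exists
  refine ⟨a + s • b, fun l hl hle => ?_⟩
  simpa using hs l hl hle

/-- A finite symmetric separating set of functionals contains a basis of the dual
space consisting of exposed functionals, given here together with the dual basis. -/
theorem exists_exposed_frame [FiniteDimensional ℝ W] {L : Set (Module.Dual ℝ W)}
    (hfin : L.Finite) (hneg : ∀ l ∈ L, -l ∈ L) (hsep : ∀ a, (∀ l ∈ L, l a = 0) → a = 0) :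
    ∃ (e : Fin (Module.finrank ℝ W) → Module.Dual ℝ W) (a : Fin (Module.finrank ℝ W) → W),
      (∀ i, Exposed L (e i)) ∧ ∀ i j, e i (a j) = if i = j then 1 else 0 := by
  classical
  have hspan : Submodule.span ℝ {e | Exposed L e} = ⊤ := by
    refine Submodule.span_eq_top_of_ne_zero fun z hz => ?_
    by_contra! h
    refine hz (hsep z fun l hl => le_antisymm ?_ ?_)
    · obtain ⟨e, he, h1⟩ := exists_exposed_pos hfin hl z
      exact h1.trans (h e he).le
    · obtain ⟨e, he, h1⟩ := exists_exposed_pos hfin (hneg l hl) z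
      have h2 := h e he
      have h3 : (-l) z = -l z := rfl
      linarith
  obtain ⟨b, hbE, hb, hli⟩ := exists_linearIndependent ℝ {e | Exposed L e}
  rw [hspan] at hb
  let B : Module.Basis b ℝ (Module.Dual ℝ W) := Module.Basis.mk hli (by simp [hb])
  have : Fintype b := FiniteDimensional.fintypeBasisIndex B
  have hcard : Fintype.card b = Module.finrank ℝ W := by
    rw [← Module.finrank_eq_card_basis B, Subspace.dual_finrank_eq]
  let eq : b ≃ Fin (Module.finrank ℝ W) := Fintype.equivFinOfCardEq hcard
  refine ⟨fun i => (eq.symm i : Module.Dual ℝ W),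
    fun j => (Module.evalEquiv ℝ W).symm (B.coord (eq.symm j)),
    fun i => hbE (eq.symm i).2, fun i j => ?_⟩
  rw [Module.apply_evalEquiv_symm_apply]
  have : ((eq.symm i : b) : Module.Dual ℝ W) = B (eq.symm i) := by
    simp [B]
  change B.coord (eq.symm j) (eq.symm i : Module.Dual ℝ W) = _
  rw [this, Module.Basis.coord_apply, Module.Basis.repr_self, Finsupp.single_apply]
  simp

end Exposed

section Frame

variable {V : Type*} [Fintype V] {w d : V → V → ℝ} {μ : V → ℝ}

theorem isHarm_iff {α : V → V → ℝ} : IsHarm w μ d α ↔ α ∈ H1set w μ d :=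
  ⟨fun h => ⟨h.anti, h.supp, h.cyc, h.coclosed⟩, fun h => ⟨⟨h.1, h.2.1, h.2.2.1⟩, h.2.2.2⟩⟩

/-- The space of harmonic forms. -/
def harm (w : V → V → ℝ) (μ : V → ℝ) (d : V → V → ℝ) : Submodule ℝ (V → V → ℝ) where
  carrier := {α | IsHarm w μ d α}
  zero_mem' := ⟨⟨fun _ _ => by simp, fun _ _ _ => rfl, fun _ _ _ _ => by simp⟩, fun _ => by simp⟩
  add_mem' {α β} hα hβ := ⟨hα.toIsClosedForm.add hβ.toIsClosedForm, fun x => by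
    have h1 := hα.coclosed x
    have h2 := hβ.coclosed x
    simp only [Pi.add_apply, mul_add, Finset.sum_add_distrib, h1, h2, add_zero]⟩
  smul_mem' t α hα := hα.smul t

theorem finrank_harm : Module.finrank ℝ (harm w μ d) = betti1 w μ d := by
  have : Submodule.span ℝ (H1set w μ d) = harm w μ d := by
    have : H1set w μ d = (harm w μ d : Set (V → V → ℝ)) := by
      ext α; exact isHarm_iff.symm
    rw [this, Submodule.span_eq]
  rw [betti1, this]

/-- The gradient functional `α ↦ α(x,y) / d(x,y)` on harmonic forms. -/
noncomputable def ell (w : V → V → ℝ) (μ : V → ℝ) (d : V → V → ℝ) (x y : V) :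
    Module.Dual ℝ (harm w μ d) where
  toFun α := α.1 x y / d x y
  map_add' α β := by simp [add_div]
  map_smul' t α := by simp [mul_div_assoc]

/-- Coordinate forms and coordinate directions: harmonic forms `α j` and, at each vertex,
neighbours `nb i s x` (the positive and negative `i`-th direction) on which
`α j` equals `± δ_{ij} d`. -/
structure IsFrame (w : V → V → ℝ) (μ : V → ℝ) (d : V → V → ℝ) {m : ℕ}
    (α : Fin m → V → V → ℝ) (nb : Fin m → ℤˣ → V → V) : Prop where
  harm : ∀ i, IsHarm w μ d (α i)
  adj : ∀ i s x, Adj w x (nb i s x)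
  val : ∀ i j s x, α j x (nb i s x) = if i = j then ((s : ℤ) : ℝ) * d x (nb i s x) else 0

/-- An exposed gradient functional is the strict maximiser for some harmonic form `a`; as the
maximum of `a / d` is attained at every vertex, the functional is represented by an edge at
every vertex. A basis of exposed functionals therefore gives a frame. -/
theorem exists_frame (hG : IsWeightedGraph w μ) (hconn : GraphConnected w)
    (hd : IsPathDistance w d) (hk : NonnegCurv w μ d) :
    ∃ (α : Fin (betti1 w μ d) → V → V → ℝ) (nb : Fin (betti1 w μ d) → ℤˣ → V → V),
      IsFrame w μ d α nb := by
  classical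
  let L : Set (Module.Dual ℝ (harm w μ d)) := {l | ∃ x y, Adj w x y ∧ l = ell w μ d x y}
  have hfin : L.Finite := by
    refine (Set.finite_range (fun p : V × V => ell w μ d p.1 p.2)).subset ?_
    rintro l ⟨x, y, -, rfl⟩
    exact ⟨(x, y), rfl⟩
  have hneg : ∀ l ∈ L, -l ∈ L := by
    rintro l ⟨x, y, h, rfl⟩
    refine ⟨y, x, h.symm' hG, LinearMap.ext fun α => ?_⟩
    have h1 : α.1 x y = -α.1 y x := α.2.anti x y
    change -(α.1 x y / d x y) = α.1 y x / d y x
    rw [h1, hd.1 x y, neg_div, neg_neg]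
  have hsep : ∀ a, (∀ l ∈ L, l a = 0) → a = 0 := by
    intro a h
    refine Subtype.ext (funext fun x => funext fun y => ?_)
    by_cases hxy : Adj w x y
    · have h1 : a.1 x y / d x y = 0 := h _ ⟨x, y, hxy, rfl⟩
      exact (div_eq_zero_iff.1 h1).resolve_right (dist_pos' hd (hxy.ne' hG)).ne'
    · exact a.2.supp x y hxy
  have hexp : ∀ e, Exposed L e → ∀ x, ∃ y, Adj w x y ∧ e = ell w μ d x y := by
    rintro e ⟨⟨x', y', h', rfl⟩, a, ha⟩ x
    obtain ⟨y, hy, hy2⟩ := max_everywhere hG hconn hd hk a.2 h' x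
    refine ⟨y, hy, ?_⟩
    by_contra hne
    exact absurd (ha (ell w μ d x y) ⟨x, y, hy, rfl⟩ (Ne.symm hne)) (not_lt.2 hy2)
  obtain ⟨e, a, he, hea⟩ := exists_exposed_frame hfin hneg hsep
  rw [← finrank_harm]
  have hnb : ∀ i (s : ℤˣ) x, ∃ y, Adj w x y ∧ ((s : ℤ) : ℝ) • e i = ell w μ d x y := by
    intro i s x
    rcases Int.units_eq_one_or s with rfl | rfl
    · simpa using hexp _ (he i) x
    · have h1 : (((-1 : ℤˣ) : ℤ) : ℝ) • e i = -e i := by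
        refine LinearMap.ext fun z => ?_
        rw [LinearMap.smul_apply, LinearMap.neg_apply]
        simp
      rw [h1]
      exact hexp _ ((he i).neg hneg) x
  choose nb hadj hval using hnb
  refine ⟨fun i => (a i).1, nb, ⟨fun i => (a i).2, hadj, fun i j s x => ?_⟩⟩
  have h1 : (((s : ℤ) : ℝ) • e i) (a j) = (a j).1 x (nb i s x) / d x (nb i s x) := by
    rw [hval]; rfl
  have h2 := dist_pos' hd ((hadj i s x).ne' hG)
  rw [LinearMap.smul_apply, hea, smul_eq_mul, eq_div_iff h2.ne'] at h1
  rw [← h1]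
  split_ifs <;> simp

theorem IsFrame.inj (hG : IsWeightedGraph w μ) (hd : IsPathDistance w d) {m : ℕ}
    {α : Fin m → V → V → ℝ} {nb : Fin m → ℤˣ → V → V} (h : IsFrame w μ d α nb)
    {i j : Fin m} {s t : ℤˣ} {x : V} (he : nb i s x = nb j t x) : i = j ∧ s = t := by
  have h1 := h.val i i s x
  have h2 := h.val j i t x
  have h3 := dist_pos' hd ((h.adj i s x).ne' hG)
  have hs : ((s : ℤ) : ℝ) ≠ 0 := by
    rcases Int.units_eq_one_or s with rfl | rfl <;> norm_num
  rw [← he] at h2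
  by_cases hij : j = i
  · subst hij
    rw [if_pos rfl] at h1 h2
    refine ⟨rfl, ?_⟩
    have h4 := mul_right_cancel₀ h3.ne' (h1.symm.trans h2)
    exact Units.ext (by exact_mod_cast h4)
  · rw [if_pos rfl] at h1
    rw [if_neg hij, h1] at h2
    exact (mul_ne_zero hs h3.ne' h2).elim

/-- The `2 m` coordinate directions at a vertex are distinct neighbours. -/
theorem IsFrame.card_le (hG : IsWeightedGraph w μ) (hd : IsPathDistance w d) {m : ℕ}
    {α : Fin m → V → V → ℝ} {nb : Fin m → ℤˣ → V → V} (h : IsFrame w μ d α nb) (x : V) :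
    2 * m ≤ deg w x := by
  let g : Fin m × ℤˣ → {y // Adj w x y} := fun p => ⟨nb p.1 p.2 x, h.adj _ _ _⟩
  have hg : Function.Injective g := fun p q hpq =>
    Prod.ext_iff.2 (h.inj hG hd (congrArg Subtype.val hpq))
  have := Nat.card_le_card_of_injective g hg
  rw [Nat.card_eq_fintype_card, Fintype.card_prod, Fintype.card_units_int, Fintype.card_fin] at this
  unfold deg
  omega

/-- If the degree is at most `2 m`, every neighbour is a coordinate direction. -/
theorem IsFrame.surj (hG : IsWeightedGraph w μ) (hd : IsPathDistance w d) {m : ℕ}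
    {α : Fin m → V → V → ℝ} {nb : Fin m → ℤˣ → V → V} (h : IsFrame w μ d α nb) {x y : V}
    (hx : deg w x ≤ 2 * m) (hxy : Adj w x y) : ∃ i s, y = nb i s x := by
  classical
  let g : Fin m × ℤˣ → {y // Adj w x y} := fun p => ⟨nb p.1 p.2 x, h.adj _ _ _⟩
  have hg : Function.Injective g := fun p q hpq =>
    Prod.ext_iff.2 (h.inj hG hd (congrArg Subtype.val hpq))
  have hb := hg.bijective_of_nat_card_le (by
    rw [Nat.card_eq_fintype_card (α := Fin m × ℤˣ), Fintype.card_prod, Fintype.card_units_int,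
      Fintype.card_fin]
    unfold deg at hx
    omega)
  obtain ⟨⟨i, s⟩, hp⟩ := hb.2 ⟨y, hxy⟩
  exact ⟨i, s, (congrArg Subtype.val hp).symm⟩

/-- On a graph of non-negative curvature, every vertex has degree at least `2 β₁`. -/
theorem two_betti_le_deg (hG : IsWeightedGraph w μ) (hconn : GraphConnected w)
    (hd : IsPathDistance w d) (hk : NonnegCurv w μ d) (x : V) : 2 * betti1 w μ d ≤ deg w x := by
  obtain ⟨α, nb, h⟩ := exists_frame hG hconn hd hk
  exact h.card_le hG hd x

end Frame

/-! ### Commuting squares of coordinate directions -/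

section Square

variable {V : Type*} [Fintype V] {w d : V → V → ℝ} {μ : V → ℝ}

/-- Two coordinate forms `β, γ` with their positive coordinate directions `S, T`. The bounds
express that each edge is a coordinate direction, on which at most one of the forms is
nonzero. -/
structure IsPair (w : V → V → ℝ) (μ : V → ℝ) (d β γ : V → V → ℝ) (S T : V → V) : Prop where
  harmβ : IsHarm w μ d β
  harmγ : IsHarm w μ d γ
  adjS : ∀ x, Adj w x (S x)
  adjT : ∀ x, Adj w x (T x)
  βS : ∀ x, β x (S x) = d x (S x)
  γS : ∀ x, γ x (S x) = 0
  βT : ∀ x, β x (T x) = 0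
  γT : ∀ x, γ x (T x) = d x (T x)
  bound : ∀ x u, Adj w x u → |β x u| + |γ x u| ≤ d x u
  posβ : ∀ x u, Adj w x u → 0 < β x u → u = S x
  posγ : ∀ x u, Adj w x u → 0 < γ x u → u = T x

variable {β γ : V → V → ℝ} {S T : V → V}

theorem IsPair.swap (h : IsPair w μ d β γ S T) : IsPair w μ d γ β T S :=
  ⟨h.harmγ, h.harmβ, h.adjT, h.adjS, h.γT, h.βT, h.γS, h.βS,
    fun x u hu => by rw [add_comm]; exact h.bound x u hu, h.posγ, h.posβ⟩

theorem IsPair.bβ (h : IsPair w μ d β γ S T) (x u : V) (hu : Adj w x u) : β x u ≤ d x u := by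
  have h1 := h.bound x u hu
  have h2 := le_abs_self (β x u)
  have h3 := abs_nonneg (γ x u)
  linarith

/-- The only vertex `u'` of the ball of `x` from which `T (S x)` can be at the distance
predicted by `β` is `T x`: apply the bound of `good_ball` to `β ± γ`. -/
theorem IsPair.tight_unique (hG : IsWeightedGraph w μ) (hconn : GraphConnected w)
    (hd : IsPathDistance w d) (h : IsPair w μ d β γ S T) {x u' : V} (hu : Ball w x u')
    (ht : β u' x + β x (S x) + β (S x) (T (S x)) = d u' (T (S x))) :
    u' = T x ∧ d x (T x) = d (S x) (T (S x)) := by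
  have key : ∀ ε : ℝ, |ε| = 1 →
      ε * (γ u' x + d (S x) (T (S x))) ≤ 0 := by
    intro ε hε
    have := (good_ball hG hconn hd (h.harmβ.toIsClosedForm.add
      (h.harmγ.toIsClosedForm.smul ε)) (fun a b hab => by
        have h1 := h.bound a b hab
        have h2 := le_abs_self (β a b)
        have h3 := le_abs_self (ε * γ a b)
        rw [abs_mul, hε, one_mul] at h3
        linarith) hu (h.adjS x) (Or.inr (h.adjT (S x)))).1
    rw [h.γS, h.γT] at this
    linarith
  have h1 := key 1 (by simp)
  have h2 := key (-1) (by simp)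
  have h3 : γ x u' = d (S x) (T (S x)) := by
    rw [h.harmγ.anti]; linarith
  have h4 := dist_pos' hd ((h.adjT (S x)).ne' hG)
  rcases hu with rfl | hu
  · rw [h.harmγ.self] at h3; linarith
  · have h5 := h.posγ x u' hu (by linarith)
    subst h5
    exact ⟨rfl, by rw [← h.γT x]; exact h3⟩

/-- Transport of mass into `T (S x)`: curvature applied to the potential `β`, raised
slightly at `T (S x)` and at a set `P` containing all vertices at which this matters. -/
theorem IsPair.flow_le (hG : IsWeightedGraph w μ) (hconn : GraphConnected w)
    (hd : IsPathDistance w d) (hk : NonnegCurv w μ d) (h : IsPair w μ d β γ S T) (x : V)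
    (P : Set V) (hxP : x ∉ P)
    (hP : ∀ u, Ball w x u → β u x + β x (S x) + β (S x) (T (S x)) = d u (T (S x)) → u ∈ P) :
    w (S x) (T (S x)) / μ (S x) ≤ jump w μ P x := by
  classical
  set y := S x with hy
  set v := T y with hv
  have hgood := fun u v' (hu : Ball w x u) (hv' : Ball w y v') =>
    (good_ball hG hconn hd h.harmβ.toIsClosedForm h.bβ hu (h.adjS x) hv').1
  have hyv : y ≠ v := (h.adjT y).ne' hG
  obtain ⟨s, hs, hslack⟩ : ∃ s : ℝ, 0 < s ∧ ∀ u, Ball w x u → u ∉ P →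
      β u x + β x y + β y v + s ≤ d u v := by
    have hev : ∀ᶠ s in nhdsWithin (0 : ℝ) (Set.Ioi 0), ∀ u, Ball w x u → u ∉ P →
        β u x + β x y + β y v + s ≤ d u v := by
      rw [Filter.eventually_all]; intro u
      by_cases hu : Ball w x u ∧ u ∉ P
      · have h1 : 0 < d u v - (β u x + β x y + β y v) :=
          sub_pos.2 (lt_of_le_of_ne (hgood u v hu.1 (Or.inr (h.adjT y)))
            (fun he => hu.2 (hP u hu.1 he)))
        filter_upwards [(gt_mem_nhds h1).filter_mono nhdsWithin_le_nhds] with s hs _ _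
        linarith
      · exact Filter.Eventually.of_forall fun s h1 h2 => absurd ⟨h1, h2⟩ hu
    obtain ⟨s, h1, h2⟩ := (hev.and self_mem_nhdsWithin).exists
    exact ⟨s, h2, h1⟩
  have key := curv_compare hG hd (h.adjS x) (hk _ _ (h.adjS x))
    (fun u => β x u + if u ∈ P then s else 0)
    (fun v' => d x y + (β y v' + if v' = v then s else 0))
    (by simp [hxP, h.harmβ.self]) (by
      change d x y + (β y y + if y = v then s else 0) = d x y
      rw [h.harmβ.self, if_neg hyv]; ring) (by
      intro u v' hu hv'
      have h1 := hgood u v' hu hv'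
      rw [h.harmβ.anti u x, h.βS x] at h1
      by_cases hvv : v' = v
      · subst hvv
        by_cases huP : u ∈ P
        · simp only [huP, if_true]; linarith
        · have h2 := hslack u hu huP
          rw [h.harmβ.anti u x, h.βS x] at h2
          simp only [huP, if_true, if_false]; linarith
      · simp only [hvv, if_false]
        split_ifs <;> linarith)
  rw [← hy] at key
  simp only [add_sub_cancel_left, mul_add, Finset.sum_add_distrib, h.harmβ.coclosed,
    zero_add] at key
  have e1 : ∑ z, w y z / μ y * (if z = v then s else 0) = w y v / μ y * s := by
    simp
  have e2 : ∑ z, w x z / μ x * (if z ∈ P then s else 0) = jump w μ P x * s := by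
    unfold jump
    rw [Finset.sum_mul]
    refine Finset.sum_congr rfl fun z _ => ?_
    split_ifs <;> simp
  rw [e1, e2] at key
  exact le_of_mul_le_mul_right key hs

/-- The increment of `β` along `T x ∼ x ∼ S x ∼ T (S x)` is the distance of the endpoints.
Otherwise no vertex of the ball of `x` realises the bound at `T (S x)`, and `flow_le` with
`P = ∅` gives a contradiction. -/
theorem IsPair.tight (hG : IsWeightedGraph w μ) (hconn : GraphConnected w)
    (hd : IsPathDistance w d) (hk : NonnegCurv w μ d) (h : IsPair w μ d β γ S T) (x : V) :
    d x (T x) = d (S x) (T (S x)) ∧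
      β (T x) x + β x (S x) + β (S x) (T (S x)) = d (T x) (T (S x)) := by
  classical
  by_contra hno
  have := h.flow_le hG hconn hd hk x ∅ (by simp) (fun u hu ht => by
    have h1 := h.tight_unique hG hconn hd hu ht
    refine absurd ⟨h1.2, ?_⟩ hno
    rw [← h1.1]; exact ht)
  have h2 : 0 < w (S x) (T (S x)) / μ (S x) := div_pos (h.adjT _) (hG.mu_pos _)
  simp [jump] at this
  linarith

/-- The case `P = {T x}` of `flow_le`. -/
theorem IsPair.rate_le (hG : IsWeightedGraph w μ) (hconn : GraphConnected w)
    (hd : IsPathDistance w d) (hk : NonnegCurv w μ d) (h : IsPair w μ d β γ S T) (x : V) :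
    w (S x) (T (S x)) / μ (S x) ≤ w x (T x) / μ x := by
  have := h.flow_le hG hconn hd hk x {T x} (by simpa using (h.adjT x).ne' hG)
    (fun u hu ht => (h.tight_unique hG hconn hd hu ht).1)
  have h1 : jump w μ {T x} x = w x (T x) / μ x := by
    unfold jump
    refine (Finset.sum_eq_single (T x) (fun b _ hb => if_neg hb)
      (fun h => absurd (Finset.mem_univ _) h)).trans (if_pos rfl)
  rwa [h1] at this

/-- Equality in `good_ball` provides a neighbour of `T x` on a geodesic to `T (S x)` at which `β`
is tight. This is `S (T x)`, and a comparison of distances leaves no room for a second step. -/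
theorem IsPair.comm (hG : IsWeightedGraph w μ) (hconn : GraphConnected w)
    (hd : IsPathDistance w d) (hk : NonnegCurv w μ d) (h : IsPair w μ d β γ S T) (x : V) :
    S (T x) = T (S x) := by
  obtain ⟨-, h2⟩ := h.tight hG hconn hd hk x
  have h3 := (h.swap.tight hG hconn hd hk x).1
  have h4 := dist_pos' hd ((h.adjS x).ne' hG)
  have h5 : d (T x) (T (S x)) = d x (S x) := by
    rw [← h2, h.harmβ.anti, h.βT, h.βT, h.βS]; ring
  have hne : T x ≠ T (S x) := by
    intro he
    rw [← he, dist_self' hd] at h5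
    linarith
  obtain ⟨u1, ha, hb, hc⟩ := (good_ball hG hconn hd h.harmβ.toIsClosedForm h.bβ
    (Or.inr (h.adjT x)) (h.adjS x) (Or.inr (h.adjT (S x)))).2 h2 hne
  obtain rfl := h.posβ _ _ ha (by rw [hb]; exact dist_pos' hd (ha.ne' hG))
  exact (hd.2.1 _ _).1 (by linarith)

end Square

section FrameSquare

variable {V : Type*} [Fintype V] {w d : V → V → ℝ} {μ : V → ℝ} {m : ℕ}
  {α : Fin m → V → V → ℝ} {nb : Fin m → ℤˣ → V → V}

theorem unit_abs (s : ℤˣ) : |((s : ℤ) : ℝ)| = 1 := by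
  rcases Int.units_eq_one_or s with rfl | rfl <;> simp

theorem unit_mul (s t : ℤˣ) : ((s : ℤ) : ℝ) * ((t : ℤ) : ℝ) = if s = t then 1 else -1 := by
  rcases Int.units_eq_one_or s with rfl | rfl <;>
  rcases Int.units_eq_one_or t with rfl | rfl <;> simp

/-- Two different axes of a frame, with arbitrary signs, form a pair if the degree is `2 m`. -/
theorem IsFrame.isPair (hG : IsWeightedGraph w μ) (hd : IsPathDistance w d)
    (h : IsFrame w μ d α nb)
    (hdeg : ∀ x, deg w x ≤ 2 * m) {i j : Fin m} (hij : i ≠ j) (s t : ℤˣ) :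
    IsPair w μ d (fun x y => ((s : ℤ) : ℝ) * α i x y) (fun x y => ((t : ℤ) : ℝ) * α j x y)
      (nb i s) (nb j t) where
  harmβ := (h.harm i).smul _
  harmγ := (h.harm j).smul _
  adjS := h.adj i s
  adjT := h.adj j t
  βS x := by rw [h.val, if_pos rfl, ← mul_assoc, unit_mul, if_pos rfl, one_mul]
  γS x := by rw [h.val, if_neg hij, mul_zero]
  βT x := by rw [h.val, if_neg hij.symm, mul_zero]
  γT x := by rw [h.val, if_pos rfl, ← mul_assoc, unit_mul, if_pos rfl, one_mul]
  bound x u hu := by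
    obtain ⟨k, r, rfl⟩ := h.surj hG hd (hdeg x) hu
    have := hd.2.2.1 x (nb k r x)
    rw [abs_mul, abs_mul, unit_abs, unit_abs, h.val, h.val]
    by_cases h1 : k = i
    · have h2 : k ≠ j := by rw [h1]; exact hij
      rw [if_pos h1, if_neg h2, abs_mul, unit_abs, abs_of_nonneg this]; simp
    · rw [if_neg h1]
      split_ifs
      · rw [abs_mul, unit_abs, abs_of_nonneg this]; simp
      · simpa using this
  posβ x u hu hpos := by
    obtain ⟨k, r, rfl⟩ := h.surj hG hd (hdeg x) hu
    rw [h.val] at hpos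
    have := hd.2.2.1 x (nb k r x)
    split_ifs at hpos with h1
    · rw [← mul_assoc, unit_mul] at hpos
      split_ifs at hpos with h2
      · rw [h1, h2]
      · linarith
    · simp at hpos
  posγ x u hu hpos := by
    obtain ⟨k, r, rfl⟩ := h.surj hG hd (hdeg x) hu
    rw [h.val] at hpos
    have := hd.2.2.1 x (nb k r x)
    split_ifs at hpos with h1
    · rw [← mul_assoc, unit_mul] at hpos
      split_ifs at hpos with h2
      · rw [h1, h2]
      · linarith
    · simp at hpos

/-- Opposite directions are inverse to each other, since forms are antisymmetric. -/
theorem IsFrame.neg_nb (hG : IsWeightedGraph w μ) (hd : IsPathDistance w d)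
    (h : IsFrame w μ d α nb) (hdeg : ∀ x, deg w x ≤ 2 * m) (i : Fin m) (s : ℤˣ) (x : V) :
    nb i (-s) (nb i s x) = x := by
  have hadj := h.adj i s x
  set y := nb i s x with hy
  obtain ⟨k, r, hkr⟩ := h.surj hG hd (hdeg y) (hadj.symm' hG)
  have h1 := h.val k k r y
  have h2 := h.val i k s x
  have h3 := dist_pos' hd (hadj.ne' hG)
  rw [← hkr, if_pos rfl, (h.harm k).anti, hd.1 y x] at h1
  rw [← hy] at h2
  split_ifs at h2 with hik
  · rw [h2, ← neg_mul] at h1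
    have h4 := mul_right_cancel₀ h3.ne' h1
    have h5 : r = -s := Units.ext (by rw [Units.val_neg]; exact_mod_cast h4.symm)
    rw [hik, ← h5]; exact hkr.symm
  · rw [h2, neg_zero] at h1
    have h4 := unit_abs r
    rcases mul_eq_zero.1 h1.symm with h5 | h5
    · rw [h5] at h4; simp at h4
    · exact (h3.ne' h5).elim

/-- Transition rates are invariant under translation in transversal directions: one inequality
is `rate_le` for `nb i s`, the other one is `rate_le` for the inverse step. -/
theorem IsFrame.rate_eq (hG : IsWeightedGraph w μ) (hconn : GraphConnected w)
    (hd : IsPathDistance w d) (hk : NonnegCurv w μ d) (h : IsFrame w μ d α nb)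
    (hdeg : ∀ x, deg w x ≤ 2 * m) {i j : Fin m} (hij : i ≠ j) (s t : ℤˣ) (x : V) :
    w x (nb j t x) / μ x = w (nb i s x) (nb j t (nb i s x)) / μ (nb i s x) := by
  refine le_antisymm ?_ ((h.isPair hG hd hdeg hij s t).rate_le hG hconn hd hk x)
  have := (h.isPair hG hd hdeg hij (-s) t).rate_le hG hconn hd hk (nb i s x)
  rwa [h.neg_nb hG hd hdeg] at this

end FrameSquare

/-! ### The group structure -/

section Group

open Classical in
/-- A transitive family of commuting permutations is the family of left translations by
generators, for a suitable abelian group structure on the underlying set. -/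
theorem exists_commGroup {V ι : Type*} [Nonempty V] (σ : ι → Equiv.Perm V)
    (hcomm : ∀ i j, σ i * σ j = σ j * σ i)
    (htrans : ∀ x y, ∃ g ∈ Subgroup.closure (Set.range σ), g x = y) :
    ∃ (_ : CommGroup V) (a : ι → V), (∀ i x, a i * x = σ i x) ∧
      Subgroup.closure (Set.range a) = ⊤ := by
  let A := Subgroup.closure (Set.range σ)
  have hA : IsMulCommutative A := Subgroup.isMulCommutative_closure (by
    rintro _ ⟨i, rfl⟩ _ ⟨j, rfl⟩
    exact hcomm i j)
  let _ : CommGroup A := { (inferInstance : Group A) with mul_comm := hA.is_comm.comm }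
  obtain ⟨o⟩ := ‹Nonempty V›
  have hmulA : ∀ (g h : A) (x : V), (g * h).1 x = g.1 (h.1 x) := fun g h x => rfl
  -- a transitive action of a commutative group by permutations is simply transitive
  let f : A → V := fun g => g.1 o
  have hf : Function.Bijective f := by
    refine ⟨fun g h hgh => Subtype.ext (Equiv.ext fun x => ?_), fun y => ?_⟩
    · obtain ⟨k, hk, rfl⟩ := htrans o x
      have hgh : g.1 o = h.1 o := hgh
      have h1 := hmulA g ⟨k, hk⟩ o
      have h2 := hmulA h ⟨k, hk⟩ o
      rw [mul_comm, hmulA] at h1 h2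
      rw [← h1, ← h2, hgh]
    · obtain ⟨k, hk, rfl⟩ := htrans o y
      exact ⟨⟨k, hk⟩, rfl⟩
  let e : V ≃ A := (Equiv.ofBijective f hf).symm
  have he : ∀ x, (e x).1 o = x := fun x => (Equiv.ofBijective f hf).apply_symm_apply x
  let instC : CommGroup V := e.commGroup
  let a : ι → V := fun i => e.symm ⟨σ i, Subgroup.subset_closure (Set.mem_range_self i)⟩
  have ha : ∀ i x, a i * x = σ i x := by
    intro i x
    have h1 : a i * x = e.symm (e (a i) * e x) := rfl
    have h2 : ∀ g : A, e.symm g = g.1 o := fun g => rfl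
    rw [h1, h2, hmulA, he, e.apply_symm_apply]
  refine ⟨instC, a, ha, ?_⟩
  rw [Subgroup.eq_top_iff']
  intro x
  obtain ⟨g, hg, rfl⟩ := htrans 1 x
  have key : ∀ y, y ∈ Subgroup.closure (Set.range a) ↔ g y ∈ Subgroup.closure (Set.range a) := by
    induction hg using Subgroup.closure_induction with
    | mem g hg =>
      obtain ⟨i, rfl⟩ := hg
      intro y
      rw [← ha, Subgroup.mul_mem_cancel_left _ (Subgroup.subset_closure (Set.mem_range_self i))]
    | one => intro y; rfl
    | mul g h _ _ h1 h2 =>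
      intro y
      rw [Equiv.Perm.mul_apply, ← h1, ← h2]
    | inv g _ h1 =>
      intro y
      have h2 : g (g⁻¹ y) = y := g.apply_symm_apply y
      rw [h1 (g⁻¹ y), h2]
  exact (key 1).1 (one_mem _)

end Group

section SharpToTorus

variable {V : Type*} [Fintype V] {w d : V → V → ℝ} {μ : V → ℝ} {m : ℕ}
  {α : Fin m → V → V → ℝ} {nb : Fin m → ℤˣ → V → V}

/-- The divergence condition for the `i`-th coordinate form, which is supported on the `i`-th
axis. -/
theorem IsFrame.coclosed (hG : IsWeightedGraph w μ) (hd : IsPathDistance w d)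
    (h : IsFrame w μ d α nb) (hdeg : ∀ x, deg w x ≤ 2 * m) (i : Fin m) (x : V) :
    w x (nb i 1 x) * d x (nb i 1 x) = w x (nb i (-1) x) * d x (nb i (-1) x) := by
  classical
  have h1 := (h.harm i).coclosed x
  have hne : nb i 1 x ≠ nb i (-1) x := fun he => by
    have := (h.inj hG hd he).2
    revert this; decide
  rw [Finset.sum_eq_add (nb i 1 x) (nb i (-1) x) hne ?_ (by simp) (by simp), h.val, h.val,
    if_pos rfl, if_pos rfl] at h1
  · have := (hG.mu_pos x).ne'
    simp only [Units.val_neg, Units.val_one, Int.cast_neg, Int.cast_one] at h1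
    field_simp at h1
    linarith
  · rintro y - ⟨h2, h3⟩
    by_cases hy : Adj w x y
    · obtain ⟨k, r, rfl⟩ := h.surj hG hd (hdeg x) hy
      rw [h.val, if_neg, mul_zero]
      rintro rfl
      rcases Int.units_eq_one_or r with rfl | rfl
      · exact h2 rfl
      · exact h3 rfl
    · rw [(h.harm i).supp x y hy, mul_zero]

theorem IsFrame.exists_torus [Nonempty V] (hG : IsWeightedGraph w μ) (hconn : GraphConnected w)
    (hd : IsPathDistance w d) (hk : NonnegCurv w μ d) (h : IsFrame w μ d α nb)
    (hdeg : ∀ x, deg w x ≤ 2 * m) (hm : betti1 w μ d = m) :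
    ∃ (_ : CommGroup V) (a : Fin m → V), IsFlatTorus a w μ d := by
  let σ : Fin m → Equiv.Perm V := fun i =>
    ⟨nb i 1, nb i (-1), h.neg_nb hG hd hdeg i 1, fun x => by
      simpa using h.neg_nb hG hd hdeg i (-1) x⟩
  have hσ : ∀ i x, σ i x = nb i 1 x := fun i x => rfl
  have hσ' : ∀ i x, (σ i)⁻¹ x = nb i (-1) x := fun i x => rfl
  obtain ⟨instC, a, ha, hcl⟩ := exists_commGroup σ (fun i j => by
      by_cases hij : i = j
      · rw [hij]
      · refine Equiv.ext fun x => ?_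
        exact (h.isPair hG hd hdeg hij 1 1).comm hG hconn hd hk x)
    (fun x y => by
      refine conn_induction hconn
        (P := fun y => ∃ g ∈ Subgroup.closure (Set.range σ), g x = y) (x := x)
        ⟨1, one_mem _, rfl⟩ ?_ y
      rintro u v ⟨g, hg, rfl⟩ huv
      obtain ⟨i, s, hs⟩ := h.surj hG hd (hdeg _) huv
      have hi : σ i ∈ Subgroup.closure (Set.range σ) := Subgroup.subset_closure (Set.mem_range_self i)
      rcases Int.units_eq_one_or s with rfl | rfl
      · exact ⟨σ i * g, mul_mem hi hg, by rw [hs]; rfl⟩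
      · exact ⟨(σ i)⁻¹ * g, mul_mem (inv_mem hi) hg, by rw [hs]; rfl⟩)
  have h1 : ∀ i x, a i * x = nb i 1 x := ha
  have h2 : ∀ i x, (a i)⁻¹ * x = nb i (-1) x := by
    intro i x
    rw [inv_mul_eq_iff_eq_mul, ha, ← hσ']
    exact ((σ i).apply_symm_apply x).symm
  have hz : ∀ i (s : ℤ), s = 1 ∨ s = -1 → ∃ t : ℤˣ, ∀ x : V, a i ^ s * x = nb i t x := by
    rintro i s (rfl | rfl)
    · exact ⟨1, fun x => by rw [zpow_one, h1]⟩
    · exact ⟨-1, fun x => by rw [zpow_neg_one, h2]⟩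
  refine ⟨instC, a, hcl, fun i j hij => ⟨fun he => ?_, fun he => ?_⟩, hd, fun x y => ⟨?_, ?_⟩,
    fun x i => ?_, fun x i j ε₁ ε₂ hij hε₁ hε₂ => ?_, fun x i j hij => ?_, hm⟩
  · have := h1 i 1
    rw [he, h1] at this
    exact hij (h.inj hG hd this).1.symm
  · have := h1 i 1
    rw [he, h2] at this
    exact hij (h.inj hG hd this).1.symm
  · intro hxy
    obtain ⟨i, s, rfl⟩ := h.surj hG hd (hdeg x) hxy
    refine ⟨i, ?_⟩
    rw [h1, h2]
    rcases Int.units_eq_one_or s with rfl | rfl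
    · exact Or.inl rfl
    · exact Or.inr rfl
  · rintro ⟨i, rfl | rfl⟩
    · rw [h1]; exact h.adj _ _ _
    · rw [h2]; exact h.adj _ _ _
  · rw [h1, h2]
    exact h.coclosed hG hd hdeg i x
  · obtain ⟨s, hs⟩ := hz i ε₁ hε₁
    obtain ⟨t, ht⟩ := hz j ε₂ hε₂
    rw [hs, hs, ht]
    exact h.rate_eq hG hconn hd hk hdeg (Ne.symm hij) t s x
  · rw [h1, h1, h1]
    exact ((h.isPair hG hd hdeg (Ne.symm hij) 1 1).tight hG hconn hd hk x).1

end SharpToTorus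

/-! ### Flat tori are sharp -/

section TorusToSharp

variable {V : Type*} [Fintype V] [CommGroup V] {w d : V → V → ℝ} {μ : V → ℝ} {m : ℕ}
  {a : Fin m → V}

/-- Translation invariance of `d`, for all choices of signs. -/
theorem torus_dist (hd : IsPathDistance w d)
    (h : ∀ (x : V) (i j : Fin m), i ≠ j → d x (a i * x) = d (a j * x) (a i * (a j * x)))
    {i j : Fin m} (hij : i ≠ j) {b s : V} (hb : b = a i ∨ b = (a i)⁻¹)
    (hs : s = a j ∨ s = (a j)⁻¹) (x : V) : d x (b * x) = d (s * x) (b * (s * x)) := by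
  have h1 : ∀ x, d x (a i * x) = d (s * x) (a i * (s * x)) := by
    intro x
    rcases hs with rfl | rfl
    · exact h x i j hij
    · have := h ((a j)⁻¹ * x) i j hij
      rw [mul_inv_cancel_left] at this
      exact this.symm
  rcases hb with rfl | rfl
  · exact h1 x
  · have := h1 ((a i)⁻¹ * x)
    rw [mul_inv_cancel_left, mul_left_comm s, mul_inv_cancel_left] at this
    rw [hd.1 x, this, hd.1]

/-- The Laplacian of a `1`-Lipschitz function does not increase along an edge `x ∼ b x` on which
it grows by `d`: the other edges at `x` are transported by translation by `b`, while the two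
edges `b, b⁻¹` compensate each other. -/
theorem torus_lap_le (hG : IsWeightedGraph w μ) (h : IsFlatTorus a w μ d) {x y : V}
    (hxy : Adj w x y) (f : V → ℝ) (hf : ∀ u v, Adj w u v → f v - f u ≤ d u v)
    (hfxy : f y - f x = d x y) : lap w μ f y ≤ lap w μ f x := by
  classical
  obtain ⟨-, -, hd, hadj, hii, hiii, hiv, -⟩ := h
  obtain ⟨i, b, hb, rfl⟩ : ∃ i, ∃ b, (b = a i ∨ b = (a i)⁻¹) ∧ y = b * x := by
    obtain ⟨i, hi | hi⟩ := (hadj x y).1 hxy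
    · exact ⟨i, _, Or.inl rfl, hi⟩
    · exact ⟨i, _, Or.inr rfl, hi⟩
  have hbadj : ∀ z, Adj w z (b * z) := fun z => (hadj _ _).2 ⟨i, by
    rcases hb with rfl | rfl
    · exact Or.inl rfl
    · exact Or.inr rfl⟩
  have hbadj' : ∀ z, Adj w z (b⁻¹ * z) := fun z => (hadj _ _).2 ⟨i, by
    rcases hb with rfl | rfl
    · exact Or.inr rfl
    · exact Or.inl (by rw [inv_inv])⟩
  have hbii : ∀ z, w z (b * z) * d z (b * z) = w z (b⁻¹ * z) * d z (b⁻¹ * z) := by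
    intro z
    rcases hb with rfl | rfl
    · exact hii z i
    · rw [inv_inv]; exact (hii z i).symm
  let T : V → V → ℝ := fun z s => w z (s * z) / μ z * (f (s * z) - f z)
  have hlap : ∀ z, lap w μ f z = ∑ s, T z s := fun z =>
    (Equiv.sum_comp (Equiv.mulRight z) (fun v => w z v / μ z * (f v - f z))).symm
  have hp : ∀ z v, 0 ≤ w z v / μ z := fun z v => div_nonneg (hG.nonneg _ _) (hG.mu_pos z).le
  -- directions transversal to `b`: the increments of `f` are compared edge by edge
  have htrans : ∀ s, s ≠ b → s ≠ b⁻¹ → T (b * x) s ≤ T x s := by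
    intro s hsb hsb'
    have hgen : ∀ z, Adj w z (s * z) → ∃ j, i ≠ j ∧ (s = a j ∨ s = (a j)⁻¹) := by
      intro z hz
      obtain ⟨j, hj⟩ := (hadj _ _).1 hz
      rw [mul_left_inj, mul_left_inj] at hj
      refine ⟨j, ?_, hj⟩
      rintro rfl
      rcases hb with rfl | rfl <;> rcases hj with rfl | rfl
      · exact hsb rfl
      · exact hsb' rfl
      · exact hsb' (inv_inv _).symm
      · exact hsb rfl
    by_cases hs : ∃ j, i ≠ j ∧ (s = a j ∨ s = (a j)⁻¹)
    · obtain ⟨j, hij, hs⟩ := hs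
      have h1 : w x (s * x) / μ x = w (b * x) (s * (b * x)) / μ (b * x) := by
        rcases hs with rfl | rfl <;> rcases hb with rfl | rfl
        · simpa using hiii x j i 1 1 hij.symm (by simp) (by simp)
        · simpa using hiii x j i 1 (-1) hij.symm (by simp) (by simp)
        · simpa using hiii x j i (-1) 1 hij.symm (by simp) (by simp)
        · simpa using hiii x j i (-1) (-1) hij.symm (by simp) (by simp)
      have h2 := torus_dist hd hiv hij hb hs x
      have h3 := hf _ _ (hbadj (s * x))
      simp only [T]
      rw [← h1]
      refine mul_le_mul_of_nonneg_left ?_ (hp _ _)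
      rw [mul_left_comm s b x]
      linarith
    · have h0 : ∀ z, w z (s * z) = 0 := fun z =>
        le_antisymm (not_lt.1 fun hz => hs (hgen z hz)) (hG.nonneg _ _)
      simp only [T, h0]; simp
  -- in direction `b`, condition (ii) makes the increments cancel
  have hx : 0 ≤ T x b + T x b⁻¹ := by
    simp only [T]
    have h1 := hf _ _ ((hbadj' x).symm' hG)
    rw [hd.1] at h1
    have h2 := mul_le_mul_of_nonneg_left h1 (hp x (b⁻¹ * x))
    have h3 : w x (b * x) / μ x * d x (b * x) = w x (b⁻¹ * x) / μ x * d x (b⁻¹ * x) := by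
      rw [div_mul_eq_mul_div, div_mul_eq_mul_div, hbii]
    rw [hfxy, h3]
    linarith
  have hy : T (b * x) b + T (b * x) b⁻¹ ≤ 0 := by
    simp only [T]
    have h1 := hf _ _ (hbadj (b * x))
    have h2 := mul_le_mul_of_nonneg_left h1 (hp (b * x) (b * (b * x)))
    have h3 : w (b * x) (b * (b * x)) / μ (b * x) * d (b * x) (b * (b * x))
        = w (b * x) (b⁻¹ * (b * x)) / μ (b * x) * d (b * x) (b⁻¹ * (b * x)) := by
      rw [div_mul_eq_mul_div, div_mul_eq_mul_div, hbii]
    rw [h3] at h2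
    rw [inv_mul_cancel_left] at h2 ⊢
    have h4 : f x - f (b * x) = -d (b * x) x := by rw [hd.1]; linarith
    rw [h4]
    linarith
  -- pairing `s` with `s⁻¹`
  have hsum : 0 ≤ ∑ s, (T x s - T (b * x) s) := by
    have h1 : ∑ s, (T x s - T (b * x) s) = ∑ s, (T x s⁻¹ - T (b * x) s⁻¹) :=
      (Equiv.sum_comp (Equiv.inv V) (fun s => T x s - T (b * x) s)).symm
    have h2 : 0 ≤ ∑ s, ((T x s - T (b * x) s) + (T x s⁻¹ - T (b * x) s⁻¹)) := by
      refine Finset.sum_nonneg fun s _ => ?_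
      by_cases hs : s = b
      · subst hs; linarith
      by_cases hs' : s = b⁻¹
      · subst hs'; rw [inv_inv]; linarith
      have h3 := htrans s hs hs'
      have h4 := htrans s⁻¹ (fun h => hs' (by rw [← h, inv_inv])) (fun h => hs (inv_injective h))
      linarith
    rw [Finset.sum_add_distrib] at h2
    linarith
  rw [Finset.sum_sub_distrib] at hsum
  rw [hlap, hlap]
  linarith

theorem torus_nonnegCurv (hG : IsWeightedGraph w μ) (h : IsFlatTorus a w μ d) :
    NonnegCurv w μ d := by
  intro x y hxy
  have hd : IsPathDistance w d := h.2.2.1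
  refine Real.sInf_nonneg ?_
  rintro r ⟨f, hf1, hf2, rfl⟩
  have hpos := dist_pos' hd (hxy.ne' hG)
  refine div_nonneg (sub_nonneg.2 (torus_lap_le hG h hxy f ?_ ?_)) hpos.le
  · intro u v huv
    have hfin : { r : ℝ | ∃ x y, Adj w x y ∧ r = |grad d f x y| }.Finite := by
      refine (Set.finite_range (fun p : V × V => |grad d f p.1 p.2|)).subset ?_
      rintro r ⟨p, q, _, rfl⟩
      exact ⟨(p, q), rfl⟩
    have h1 : |grad d f u v| ≤ 1 := by
      rw [← hf2]; exact le_csSup hfin.bddAbove ⟨u, v, huv, rfl⟩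
    have h2 := dist_pos' hd (huv.ne' hG)
    rw [grad, abs_div, abs_of_pos h2, div_le_one h2, abs_sub_comm] at h1
    exact (le_abs_self _).trans h1
  · rw [grad, hd.1 y x, div_eq_one_iff_eq hpos.ne'] at hf1
    exact hf1

theorem torus_deg_le (h : IsFlatTorus a w μ d) (x : V) : deg w x ≤ 2 * m := by
  obtain ⟨-, -, -, hadj, -⟩ := h
  let g : Fin m × Bool → {y // Adj w x y} := fun p =>
    if p.2 then ⟨a p.1 * x, (hadj _ _).2 ⟨p.1, Or.inl rfl⟩⟩
    else ⟨(a p.1)⁻¹ * x, (hadj _ _).2 ⟨p.1, Or.inr rfl⟩⟩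
  have hg : Function.Surjective g := by
    rintro ⟨y, hy⟩
    obtain ⟨i, rfl | rfl⟩ := (hadj _ _).1 hy
    · exact ⟨(i, true), rfl⟩
    · exact ⟨(i, false), rfl⟩
  have := Nat.card_le_card_of_surjective g hg
  rw [Nat.card_eq_fintype_card (α := Fin m × Bool), Fintype.card_prod, Fintype.card_bool,
    Fintype.card_fin] at this
  unfold deg
  omega

end TorusToSharp

end Paper

open Paper in
/-- **Theorem (characterization of Ollivier-Betti sharpness).**
Let `G = (V, w, μ)` be a finite connected weighted graph with a general path distance `d`.
Then `G` is Ollivier-Betti sharp (non-negative Ollivier curvature and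
`β₁(M₂(G)) = deg_max / 2`) with `β₁(M₂(G)) = m` if and only if there exist an abelian group
structure on `V` and generators `a_1,…,a_m` making `((V,·),(a_1,…,a_m),w,μ,d)` a weighted
flat torus. -/
theorem ollivierBettiSharp_iff_flatTorus
    {V : Type*} [instF : Fintype V] [Nonempty V] (w : V → V → ℝ) (μ : V → ℝ) (d : V → V → ℝ)
    (hG : IsWeightedGraph w μ) (hconn : GraphConnected w) (hd : IsPathDistance w d)
    (m : ℕ) :
    (NonnegCurv w μ d ∧ 2 * betti1 w μ d = degMax w ∧ betti1 w μ d = m) ↔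
      ∃ (instC : CommGroup V) (a : Fin m → V), @IsFlatTorus V instF instC m a w μ d := by
  constructor
  · rintro ⟨hk, h2, rfl⟩
    obtain ⟨α, nb, hfr⟩ := exists_frame hG hconn hd hk
    have hdeg : ∀ x, deg w x ≤ 2 * betti1 w μ d := fun x => by
      rw [h2]
      exact le_ciSup (Set.finite_range fun x => deg w x).bddAbove x
    exact hfr.exists_torus hG hconn hd hk hdeg rfl
  · rintro ⟨instC, a, h⟩
    have hk := torus_nonnegCurv hG h
    have hm : betti1 w μ d = m := h.2.2.2.2.2.2.2
    refine ⟨hk, le_antisymm ?_ ?_, hm⟩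
    · exact (two_betti_le_deg hG hconn hd hk 1).trans
        (le_ciSup (Set.finite_range fun x => deg w x).bddAbove 1)
    · rw [hm]
      exact ciSup_le (torus_deg_le h)
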